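/- Assume Conditions (C). There exists a constant A > 0 such that whenever the pair of sequences (x_n, y) verifies Conditions (C2), one has P(|X(x_n) − Σ_{k=1}^{N(x_n)} E[w_{v(k)}]| ≥ y) ≤ A·exp(−y²/(A(y·n^{1/3} + x_n))). -/

import Mathlib

open MeasureTheory Filter Asymptotics
open scoped Classical ENNReal Topology

noncomputable section

/-- `ℓ_n`: the total weight. -/
def ell (w : ∀ n : ℕ, Fin n → ℝ) (n : ℕ) : ℝ := ∑ i, w n i

/-- Conditions (C) on the triangular array of weights, relative to the law `μ` of the
limiting random variable `W`. -/
structure CondC (w : ∀ n : ℕ, Fin n → ℝ) (μ : Measure ℝ) : Prop where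
  isProb : IsProbabilityMeasure μ
  pos : ∀ᵐ x ∂μ, 0 < x
  w_pos : ∀ n, ∀ i : Fin n, 0 < w n i
  w_anti : ∀ n, ∀ i j : Fin n, i ≤ j → w n j ≤ w n i
  int3 : Integrable (fun x => x ^ 3) μ
  moment_eq : ∫ x, x ^ 2 ∂μ = ∫ x, x ∂μ
  weak : ∀ g : BoundedContinuousFunction ℝ ℝ,
    Tendsto (fun n : ℕ => (∑ i : Fin n, g (w n i)) / (n : ℝ)) atTop (𝓝 (∫ x, g x ∂μ))
  ell_asymp : (fun n : ℕ => ell w n - (∫ x, x ∂μ) * (n : ℝ)) =o[atTop]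
      fun n : ℕ => (n : ℝ) ^ ((2 : ℝ) / 3)
  sq_asymp : (fun n : ℕ => (∑ i : Fin n, (w n i) ^ 2) - (∫ x, x ^ 2 ∂μ) * (n : ℝ)) =o[atTop]
      fun n : ℕ => (n : ℝ) ^ ((2 : ℝ) / 3)
  cube_asymp : (fun n : ℕ => (∑ i : Fin n, (w n i) ^ 3) - (∫ x, x ^ 3 ∂μ) * (n : ℝ)) =o[atTop]
      fun _ : ℕ => (1 : ℝ)
  max_asymp : (fun n : ℕ => ⨆ i : Fin n, w n i) =o[atTop] fun n : ℕ => (n : ℝ) ^ ((1 : ℝ) / 3)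

/-- The constant `C = E[W³]/E[W]`. -/
def Cconst (μ : Measure ℝ) : ℝ := (∫ x, x ^ 3 ∂μ) / (∫ x, x ∂μ)

/-- The critical percolation parameter `p_f = (ℓ_n^{1/3} + f_n)/ℓ_n^{4/3}`. -/
def pf (w : ∀ n : ℕ, Fin n → ℝ) (f : ℕ → ℝ) (n : ℕ) : ℝ :=
  (ell w n ^ ((1 : ℝ) / 3) + f n) / ell w n ^ ((4 : ℝ) / 3)

/-- A Bernoulli-type measure on `Bool` with parameter `p`. -/
def bern (p : ℝ) : Measure Bool :=
  ENNReal.ofReal (1 - p) • Measure.dirac false + ENNReal.ofReal p • Measure.dirac true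

/-- The law of the independent edge indicators of the rank-1 inhomogeneous random graph
`G(W,p)`: the indicator attached to the (ordered) pair `(i,j)` is Bernoulli with success
probability `1 - exp (- w i * w j * p)`, all independent. -/
def graphMeasure (n : ℕ) (wn : Fin n → ℝ) (p : ℝ) : Measure (Fin n → Fin n → Bool) :=
  Measure.pi fun i => Measure.pi fun j => bern (1 - Real.exp (-(wn i * wn j * p)))

/-- The simple graph built from a sample of edge indicators: `i ~ j` iff `i ≠ j` and the
indicator of the pair `(min i j, max i j)` is `true`. -/
def graphOf {n : ℕ} (ω : Fin n → Fin n → Bool) : SimpleGraph (Fin n) :=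
  SimpleGraph.fromRel fun i j => ω (min i j) (max i j) = true

/-- The size (number of vertices) of a connected component. -/
def csize {n : ℕ} (G : SimpleGraph (Fin n)) (c : G.ConnectedComponent) : ℕ :=
  Nat.card {v : Fin n // G.connectedComponentMk v = c}

/-- The weight of a connected component: sum of the weights of its vertices. -/
def cweight {n : ℕ} (wn : Fin n → ℝ) (G : SimpleGraph (Fin n)) (c : G.ConnectedComponent) : ℝ :=
  ∑ v : Fin n, if G.connectedComponentMk v = c then wn v else 0

/-- The number of edges of a connected component. -/
def cedges {n : ℕ} (G : SimpleGraph (Fin n)) (c : G.ConnectedComponent) : ℕ :=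
  Nat.card {e : Sym2 (Fin n) // e ∈ G.edgeSet ∧ ∀ v ∈ e, G.connectedComponentMk v = c}

/-- The surplus (excess) of a connected component: edges − vertices + 1. -/
def csurplus {n : ℕ} (G : SimpleGraph (Fin n)) (c : G.ConnectedComponent) : ℤ :=
  (cedges G c : ℤ) - (csize G c : ℤ) + 1

/-- `c` is a largest connected component. -/
def isLargest {n : ℕ} (G : SimpleGraph (Fin n)) (c : G.ConnectedComponent) : Prop :=
  ∀ c', csize G c' ≤ csize G c

/-- The finset of connected components of a graph on `Fin n`. -/
def comps {n : ℕ} (G : SimpleGraph (Fin n)) : Finset G.ConnectedComponent :=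
  Finset.univ.image G.connectedComponentMk

/-- The law of the size-biased random order without replacement `(v(1),…,v(n))`, seen as a
measure on functions `Fin n → Fin n` (supported on permutations `σ`, with
`P(v = σ) = ∏_i w (σ i) / (ℓ_n − ∑_{k<i} w (σ k))`). -/
def sbMeasure (n : ℕ) (wn : Fin n → ℝ) : Measure (Fin n → Fin n) :=
  Measure.sum fun σ : Equiv.Perm (Fin n) =>
    ENNReal.ofReal (∏ i : Fin n,
        wn (σ i) / ((∑ k, wn k) - ∑ k ∈ Finset.univ.filter fun k => k < i, wn (σ k))) •
      Measure.dirac ⇑σ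

/-- The joint law of (edge indicators of `G(W,p)`, size-biased order), the two being
independent. -/
def expMeasure' (n : ℕ) (wn : Fin n → ℝ) (p : ℝ) :
    Measure ((Fin n → Fin n → Bool) × (Fin n → Fin n)) :=
  Measure.sum fun σ : Equiv.Perm (Fin n) =>
    ENNReal.ofReal (∏ i : Fin n,
        wn (σ i) / ((∑ k, wn k) - ∑ k ∈ Finset.univ.filter fun k => k < i, wn (σ k))) •
      (graphMeasure n wn p).map fun g => (g, ⇑σ)

/-- `sbW wn vord k` is `w_{v(k)}` (1-based), with the conventions `w_{v(0)} = 0` and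
`w_{v(k)} = 0` for `k > n`. -/
def sbW {n : ℕ} (wn : Fin n → ℝ) (vord : Fin n → Fin n) (k : ℕ) : ℝ :=
  if h : k - 1 < n then (if k = 0 then 0 else wn (vord ⟨k - 1, h⟩)) else 0

/-- The (0-based) first position, in the order `vord`, of a vertex of the component `c`;
this governs the order in which components are discovered by the breadth-first walk. -/
def firstIdx {n : ℕ} (G : SimpleGraph (Fin n)) (vord : Fin n → Fin n)
    (c : G.ConnectedComponent) : ℕ :=
  sInf {i : ℕ | ∃ h : i < n, G.connectedComponentMk (vord ⟨i, h⟩) = c}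

/-- The number of vertices explored strictly before the exploration of the component `c`
starts: components are explored in the order of their first appearance in `vord`, and the
exploration of `c` occupies the steps `startT c + 1, …, startT c + csize c`. -/
def startT {n : ℕ} (G : SimpleGraph (Fin n)) (vord : Fin n → Fin n)
    (c : G.ConnectedComponent) : ℕ :=
  ∑ v : Fin n, if firstIdx G vord (G.connectedComponentMk v) < firstIdx G vord c then 1 else 0

/-- The state (explored vertices, queue of discovered-but-unexplored vertices) of the
breadth-first walk after `i` steps; roots are chosen as the first undiscovered vertex in the
order `vord`, and children are queued in the order `vord`. -/
def bfwQueue {n : ℕ} (G : SimpleGraph (Fin n)) (vord : Fin n → Fin n) :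
    ℕ → Finset (Fin n) × List (Fin n)
  | 0 => (∅, [])
  | i + 1 =>
    let s := bfwQueue G vord i
    let q : List (Fin n) :=
      if s.2.isEmpty then ((List.ofFn vord).filter fun v => decide (v ∉ s.1)).take 1 else s.2
    match q with
    | [] => (s.1, [])
    | v :: rest =>
      (insert v s.1,
        rest ++ (List.ofFn vord).filter fun u => decide (G.Adj v u ∧ u ∉ s.1 ∧ u ∉ q))

/-- The reflected exploration process `L` of the breadth-first walk:
`L_0 = 1`, `L_{i+1} = max (L_i + c(i+1) - 1) 1`. -/
def Lproc {n : ℕ} (G : SimpleGraph (Fin n)) (vord : Fin n → Fin n) (i : ℕ) : ℕ :=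
  max (bfwQueue G vord i).2.length 1

/-- `discNbrs G vord i` is the number of neighbours of `v(i+1)` (0-based: `vord i`) outside
`{v(1),…,v(i+1)}`, i.e. the increment `X⁰_{i+1} + 1` of the process `L⁰`. -/
def discNbrs {n : ℕ} (G : SimpleGraph (Fin n)) (vord : Fin n → Fin n) (i : ℕ) : ℕ :=
  Nat.card {j : Fin n // (∃ h : i < n, G.Adj (vord ⟨i, h⟩) j) ∧
    ∀ k : ℕ, ∀ hk : k < n, k ≤ i → vord ⟨k, hk⟩ ≠ j}

/-- The process `L⁰`: `L⁰_0 = 1`, `L⁰_{i+1} = L⁰_i + X⁰_{i+1}` where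
`X⁰_{i+1} = ∑_{j ∉ {v(1),…,v(i+1)}} Y(v(i+1), j) − 1`. -/
def L0 {n : ℕ} (G : SimpleGraph (Fin n)) (vord : Fin n → Fin n) (m : ℕ) : ℤ :=
  1 - (m : ℤ) + ∑ i ∈ Finset.range m, (discNbrs G vord i : ℤ)

/-- The deterministic-drift process `L̃^h`, defined by
`L̃^h_m + m − 1 = ∑_{i=1}^m ∑_{k > i+h} (1 − exp (−w_{v(i)} w_{v(k)} p))`,
the inner sum being over positions `k ≤ n` in the size-biased order. -/
def Ltilde {n : ℕ} (wn : Fin n → ℝ) (p : ℝ) (vord : Fin n → Fin n) (h m : ℕ) : ℝ :=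
  1 - (m : ℝ) + ∑ i ∈ Finset.range m,
    if hi : i < n then
      ∑ k : Fin n, if i + h < (k : ℕ) then
        1 - Real.exp (-(wn (vord ⟨i, hi⟩) * wn (vord k) * p)) else 0
    else 0

/-- The law of the independent exponential clocks `(T_k)_{k ≤ n}`, `T_k` of rate `w_k / ℓ_n`. -/
def clocksMeasure (n : ℕ) (wn : Fin n → ℝ) : Measure (Fin n → ℝ) :=
  Measure.pi fun k => ProbabilityTheory.expMeasure (wn k / ∑ i, wn i)

/-- `N(x)`: the number of clocks that have rung by time `x`. -/
def Nclock {n : ℕ} (x : ℝ) (ω : Fin n → ℝ) : ℕ :=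
  ∑ k : Fin n, if ω k ≤ x then 1 else 0

/-- `X(x)`: the total weight of the clocks that have rung by time `x`. -/
def Xclock {n : ℕ} (wn : Fin n → ℝ) (x : ℝ) (ω : Fin n → ℝ) : ℝ :=
  ∑ k : Fin n, if ω k ≤ x then wn k else 0

/-- Conditions (C2) on a pair of sequences `(a, b)`, relative to the constant `Ā`. -/
structure Cond2 (w : ∀ n : ℕ, Fin n → ℝ) (Abar : ℝ) (a b : ℕ → ℝ) : Prop where
  exp_lt : ∀ᶠ n : ℕ in atTop,
    Real.exp (-(b n) ^ 2 / (Abar * (b n * (n : ℝ) ^ ((1 : ℝ) / 3) + a n))) < 1 / 4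
  a_top : Tendsto a atTop atTop
  b_top : Tendsto b atTop atTop
  a_lito : a =o[atTop] fun n : ℕ => (n : ℝ)
  b_bigO : b =O[atTop] a
  a_bigO : a =O[atTop] fun n => b n * ell w n ^ ((1 : ℝ) / 3)
  a_sq_bigO : (fun n => a n ^ 2) =O[atTop] fun n => b n * ell w n

/-- Conditions (C3) on a quadruple of sequences `(a, b, c, d)`. -/
structure Cond3 (w : ∀ n : ℕ, Fin n → ℝ) (Abar : ℝ) (a b c d : ℕ → ℝ) : Prop where
  sum_lito : (fun n => a n + c n) =o[atTop] fun n : ℕ => (n : ℝ)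
  diff_top : Tendsto (fun n => a n - b n) atTop atTop
  d_bigO : d =O[atTop] fun n => a n - b n
  c2 : Cond2 w Abar (fun n => Real.sqrt ((a n - b n) * (a n + c n))) d

/-- The list of component sizes, sorted in decreasing order. -/
def sizesList {n : ℕ} (G : SimpleGraph (Fin n)) : List ℕ :=
  (((comps G).val.map fun c => csize G c).sort (· ≤ ·)).reverse

/-- `kthSize G k` is the size of the `(k+1)`-st largest connected component of `G`
(`0` if there is no such component). -/
def kthSize {n : ℕ} (G : SimpleGraph (Fin n)) (k : ℕ) : ℕ := (sizesList G).getD k 0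

end

/-!
Let `g` and `h` be the means of `X(x)` and `N(x)`. Both variables are sums of independent bounded
terms, so Bernstein's inequality concentrates them around `g` and `h`, and what is left to compare
with `g` is the mean `U k` of the total weight of the first `k` picks, at `k = N(x)`.

The set of the clocks that have rung by time `s` is a pure birth Markov chain. The conditional mean
of the weight of the first `k` picks, given this set, is a martingale up to the `k`-th ring; once it
is continued by the total weight of the set, its drift is at most of order `Q` per additional ring,
where `Q` bounds `∑ w_i ^ 2 / ∑ w_i`. Dynkin's formula then gives
`|U k - g| ≤ 2 * Q * |k - h| + 3 * Q * √x`. For `y ≤ 9 * Q * √x` the bound exceeds `1`; for larger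
`y` the term `3 * Q * √x` is at most `y / 3`, and a deviation `y` forces a deviation `y / 3` of
`X(x)` or `y / (6 * Q)` of `N(x)`.
-/

open ProbabilityTheory

section Concentration

variable {Ω : Type*} [MeasurableSpace Ω] {P : Measure Ω} [IsProbabilityMeasure P]

theorem mgf_sub_integral_le_exp_sq {X : Ω → ℝ} {B θ : ℝ} (hX : AEMeasurable X P)
    (hB : ∀ᵐ ω ∂P, |X ω| ≤ B) (hθ : |θ| * B ≤ 1) :
    mgf (fun ω => X ω - ∫ ω', X ω' ∂P) P θ ≤ Real.exp (θ ^ 2 * ∫ ω, X ω ^ 2 ∂P) := by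
  have hint : Integrable X P := Integrable.of_bound hX.aestronglyMeasurable B hB
  have hint_sq : Integrable (fun ω => X ω ^ 2) P :=
    (MemLp.of_bound hX.aestronglyMeasurable B hB).integrable_sq
  have hint_lin : Integrable (fun ω => 1 + θ * X ω) P :=
    (integrable_const 1).add (hint.const_mul θ)
  have hint_quad : Integrable (fun ω => 1 + θ * X ω + θ ^ 2 * X ω ^ 2) P :=
    hint_lin.add (hint_sq.const_mul (θ ^ 2))
  have hquad : ∀ᵐ ω ∂P, Real.exp (θ * X ω) ≤ 1 + θ * X ω + θ ^ 2 * X ω ^ 2 := by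
    filter_upwards [hB] with ω hω
    have hsmall : |θ * X ω| ≤ 1 := by
      rw [abs_mul]
      exact (mul_le_mul_of_nonneg_left hω (abs_nonneg θ)).trans hθ
    linarith [le_of_abs_le (Real.abs_exp_sub_one_sub_id_le hsmall), mul_pow θ (X ω) 2]
  have hmgf : mgf X P θ ≤ Real.exp (θ * ∫ ω, X ω ∂P + θ ^ 2 * ∫ ω, X ω ^ 2 ∂P) :=
    calc mgf X P θ ≤ ∫ ω, (1 + θ * X ω + θ ^ 2 * X ω ^ 2) ∂P :=
          integral_mono_of_nonneg (.of_forall fun ω => (Real.exp_pos _).le) hint_quad hquad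
      _ = θ * ∫ ω, X ω ∂P + θ ^ 2 * ∫ ω, X ω ^ 2 ∂P + 1 := by
          rw [integral_add hint_lin (hint_sq.const_mul _),
            integral_add (integrable_const 1) (hint.const_mul θ), integral_const_mul,
            integral_const_mul, integral_const, probReal_univ, one_smul]
          ring
      _ ≤ _ := Real.add_one_le_exp _
  simp only [sub_eq_add_neg]
  rw [mgf_add_const]
  refine (mul_le_mul_of_nonneg_right hmgf (Real.exp_pos _).le).trans_eq ?_
  rw [← Real.exp_add]
  ring_nf

variable {ι : Type*} [Fintype ι] {X : ι → Ω → ℝ} {B V : ℝ}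

theorem integrable_exp_mul_sum_sub_integral (hindep : iIndepFun X P)
    (hmeas : ∀ i, Measurable (X i)) (hB : ∀ i, ∀ᵐ ω ∂P, |X i ω| ≤ B) (θ : ℝ) :
    Integrable (fun ω => Real.exp (θ * ∑ i, (X i ω - ∫ ω', X i ω' ∂P))) P := by
  have hterm : ∀ i ∈ Finset.univ,
      Integrable (fun ω => Real.exp (θ * (X i ω - ∫ ω', X i ω' ∂P))) P := fun i _ => by
    refine integrable_exp_mul_of_mem_Icc ((hmeas i).sub_const _).aemeasurable
      (a := -B - ∫ ω, X i ω ∂P) (b := B - ∫ ω, X i ω ∂P) ?_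
    filter_upwards [hB i] with ω hω
    exact ⟨sub_le_sub_right (neg_le_of_abs_le hω) _, sub_le_sub_right (le_of_abs_le hω) _⟩
  have hcentred : iIndepFun (fun i ω => X i ω - ∫ ω', X i ω' ∂P) P :=
    hindep.comp (fun i z => z - ∫ ω', X i ω' ∂P) fun i => measurable_id.sub_const _
  simpa only [Finset.sum_apply] using
    hcentred.integrable_exp_mul_sum (fun i => (hmeas i).sub_const _) hterm

theorem mgf_sum_sub_integral_le_exp_sq (hindep : iIndepFun X P)
    (hmeas : ∀ i, Measurable (X i)) (hB : ∀ i, ∀ᵐ ω ∂P, |X i ω| ≤ B) {θ : ℝ} (hθ : |θ| * B ≤ 1) :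
    mgf (fun ω => ∑ i, (X i ω - ∫ ω', X i ω' ∂P)) P θ ≤
      Real.exp (θ ^ 2 * ∑ i, ∫ ω, X i ω ^ 2 ∂P) := by
  have hcentred : iIndepFun (fun i ω => X i ω - ∫ ω', X i ω' ∂P) P :=
    hindep.comp (fun i z => z - ∫ ω', X i ω' ∂P) fun i => measurable_id.sub_const _
  calc mgf (fun ω => ∑ i, (X i ω - ∫ ω', X i ω' ∂P)) P θ
      = ∏ i, mgf (fun ω => X i ω - ∫ ω', X i ω' ∂P) P θ := by
        rw [← hcentred.mgf_sum fun i => (hmeas i).sub_const _]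
        congr 1 with ω
        rw [Finset.sum_apply]
    _ ≤ ∏ i, Real.exp (θ ^ 2 * ∫ ω, X i ω ^ 2 ∂P) :=
        Finset.prod_le_prod (fun i _ => mgf_nonneg) fun i _ =>
          mgf_sub_integral_le_exp_sq (hmeas i).aemeasurable (hB i) hθ
    _ = Real.exp (θ ^ 2 * ∑ i, ∫ ω, X i ω ^ 2 ∂P) := by
        rw [← Real.exp_sum, Finset.mul_sum]

theorem measureReal_le_sum_sub_integral_le (hindep : iIndepFun X P)
    (hmeas : ∀ i, Measurable (X i)) (hB : ∀ i, ∀ᵐ ω ∂P, |X i ω| ≤ B) (hB0 : 0 ≤ B)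
    (hV : ∑ i, ∫ ω, X i ω ^ 2 ∂P ≤ V) {t : ℝ} (ht : 0 ≤ t) :
    P.real {ω | t ≤ ∑ i, (X i ω - ∫ ω', X i ω' ∂P)} ≤
      Real.exp (-t ^ 2 / (2 * (2 * V + B * t))) := by
  have hV0 : 0 ≤ V :=
    (Finset.sum_nonneg fun i _ => integral_nonneg fun ω => sq_nonneg (X i ω)).trans hV
  have hBt : 0 ≤ B * t := mul_nonneg hB0 ht
  rcases (add_nonneg (mul_nonneg zero_le_two hV0) hBt).eq_or_lt with hD | hD
  · rw [← hD, mul_zero, div_zero, Real.exp_zero]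
    exact measureReal_le_one
  set θ : ℝ := t / (2 * V + B * t) with hθ
  have hθ0 : 0 ≤ θ := div_nonneg ht hD.le
  have hθB : |θ| * B ≤ 1 := by
    rw [abs_of_nonneg hθ0, hθ, div_mul_eq_mul_div, div_le_one hD]
    linarith
  have hθV : θ ^ 2 * V ≤ θ * t / 2 := by
    have hθt : θ ^ 2 * (2 * V + B * t) = θ * t := by rw [hθ]; field_simp
    linarith [mul_nonneg (sq_nonneg θ) hBt]
  calc P.real {ω | t ≤ ∑ i, (X i ω - ∫ ω', X i ω' ∂P)}
      ≤ Real.exp (-θ * t) * mgf (fun ω => ∑ i, (X i ω - ∫ ω', X i ω' ∂P)) P θ :=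
        measure_ge_le_exp_mul_mgf t hθ0 (integrable_exp_mul_sum_sub_integral hindep hmeas hB θ)
    _ ≤ Real.exp (-θ * t) * Real.exp (θ ^ 2 * V) := by
        gcongr
        refine (mgf_sum_sub_integral_le_exp_sq hindep hmeas hB hθB).trans ?_
        gcongr
    _ = Real.exp (-θ * t + θ ^ 2 * V) := (Real.exp_add _ _).symm
    _ ≤ Real.exp (-(θ * t / 2)) := Real.exp_le_exp.2 (by linarith)
    _ = Real.exp (-t ^ 2 / (2 * (2 * V + B * t))) := by rw [hθ]; congr 1; field_simp

/-- Bernstein's inequality. -/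
theorem measureReal_le_abs_sum_sub_integral_le (hindep : iIndepFun X P)
    (hmeas : ∀ i, Measurable (X i)) (hB : ∀ i, ∀ᵐ ω ∂P, |X i ω| ≤ B) (hB0 : 0 ≤ B)
    (hV : ∑ i, ∫ ω, X i ω ^ 2 ∂P ≤ V) {t : ℝ} (ht : 0 ≤ t) :
    P.real {ω | t ≤ |∑ i, (X i ω - ∫ ω', X i ω' ∂P)|} ≤
      2 * Real.exp (-t ^ 2 / (2 * (2 * V + B * t))) := by
  have hupper := measureReal_le_sum_sub_integral_le hindep hmeas hB hB0 hV ht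
  have hlower := measureReal_le_sum_sub_integral_le (X := fun i ω => -X i ω)
    (hindep.comp (fun _ z => -z) fun _ => measurable_neg) (fun i => (hmeas i).neg)
    (by simpa only [abs_neg] using hB) hB0 (by simpa only [neg_sq] using hV) ht
  have hneg : ∀ ω, ∑ i, (-X i ω - ∫ ω', -X i ω' ∂P) = -∑ i, (X i ω - ∫ ω', X i ω' ∂P) := fun ω => by
    simp only [integral_neg, ← Finset.sum_neg_distrib, neg_sub, neg_sub_neg]
  simp only [hneg] at hlower
  simp only [le_abs, Set.ofPred_or]
  linarith [measureReal_union_le (μ := P) {ω | t ≤ ∑ i, (X i ω - ∫ ω', X i ω' ∂P)}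
    {ω | t ≤ -∑ i, (X i ω - ∫ ω', X i ω' ∂P)}]

theorem integral_abs_sum_sub_integral_le_sqrt (hindep : iIndepFun X P)
    (hmeas : ∀ i, MemLp (X i) 2 P) (hV : ∑ i, ∫ ω, X i ω ^ 2 ∂P ≤ V) :
    ∫ ω, |∑ i, (X i ω - ∫ ω', X i ω' ∂P)| ∂P ≤ √V := by
  have hX : MemLp (∑ i, X i) 2 P := memLp_finsetSum' _ fun i _ => hmeas i
  have hcenter : ∀ ω, ∑ i, (X i ω - ∫ ω', X i ω' ∂P) = (∑ i, X i) ω - ∫ ω', (∑ i, X i) ω' ∂P :=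
    fun ω => by
      simp only [Finset.sum_apply]
      rw [integral_finsetSum _ fun i _ => (hmeas i).integrable one_le_two, Finset.sum_sub_distrib]
  set Y : Ω → ℝ := fun ω => |∑ i, (X i ω - ∫ ω', X i ω' ∂P)| with hY
  have hYmem : MemLp Y 2 P := by
    simp only [hY, hcenter]
    exact (hX.sub (memLp_const _)).norm
  have hvar : ∫ ω, Y ω ^ 2 ∂P ≤ V :=
    calc ∫ ω, Y ω ^ 2 ∂P = Var[∑ i, X i; P] := by
          simp only [hY, hcenter, sq_abs, variance_eq_integral hX.aemeasurable]
      _ = ∑ i, Var[X i; P] :=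
          IndepFun.variance_sum (fun i _ => hmeas i) fun i _ j _ hij => hindep.indepFun hij
      _ ≤ ∑ i, ∫ ω, X i ω ^ 2 ∂P := Finset.sum_le_sum fun i _ =>
          variance_le_expectation_sq (hmeas i).aestronglyMeasurable
      _ ≤ V := hV
  refine Real.le_sqrt_of_sq_le (le_trans ?_ hvar)
  have := variance_nonneg Y P
  rw [variance_eq_sub hYmem] at this
  simpa using this

end Concentration

section Clocks

variable {ι : Type*} {s : ℝ}

theorem expMeasure_real_Iic {c : ℝ} (hc : 0 < c) (hs : 0 ≤ s) :
    (expMeasure c).real (Set.Iic s) = 1 - Real.exp (-(c * s)) := by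
  have := isProbabilityMeasure_expMeasure hc
  rw [← cdf_eq_real, cdf_expMeasure_eq hc, if_pos hs]

theorem abs_indicator_Iic_le (c z : ℝ) : |(Set.Iic s).indicator (fun _ => c) z| ≤ |c| := by
  by_cases h : z ∈ Set.Iic s <;> simp [h]

theorem measurable_indicator_Iic_eval (c : ℝ) (j : ι) :
    Measurable fun ω : ι → ℝ => (Set.Iic s).indicator (fun _ => c) (ω j) :=
  (measurable_const.indicator measurableSet_Iic).comp (measurable_pi_apply j)

variable [Fintype ι] {r : ι → ℝ}

/-- The law of independent exponential clocks, the `j`-th one having rate `r j`. -/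
noncomputable def clockLaw (r : ι → ℝ) : Measure (ι → ℝ) := Measure.pi fun j => expMeasure (r j)

/-- The set of the clocks that have rung by time `s`. -/
noncomputable def rung (s : ℝ) (ω : ι → ℝ) : Finset ι := Finset.univ.filter fun j => ω j ≤ s

/-- The law of the set of the clocks that have rung by time `s`: the law at time `s` of the Markov
chain on `Finset ι`, started at `∅`, in which every absent `j` is added at rate `r j`. -/
noncomputable def rungLaw (r : ι → ℝ) (s : ℝ) : Measure (Finset ι) := (clockLaw r).map (rung s)

theorem mem_rung {ω : ι → ℝ} {j : ι} : j ∈ rung s ω ↔ ω j ≤ s := by simp [rung]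

theorem measurable_rung (s : ℝ) : Measurable (rung s : (ι → ℝ) → Finset ι) := by
  refine measurable_finset_iff.2 fun j => ?_
  simp only [mem_rung]
  exact measurableSet_setOfPred.1 (measurableSet_le (measurable_pi_apply j) measurable_const)

theorem sum_rung (a : ι → ℝ) (ω : ι → ℝ) :
    ∑ j ∈ rung s ω, a j = ∑ j, (Set.Iic s).indicator (fun _ => a j) (ω j) := by
  simp only [rung, Finset.sum_filter, Set.indicator, Set.mem_Iic]

theorem isProbabilityMeasure_clockLaw (hr : ∀ j, 0 < r j) : IsProbabilityMeasure (clockLaw r) :=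
  haveI := fun j => isProbabilityMeasure_expMeasure (hr j)
  inferInstanceAs (IsProbabilityMeasure (Measure.pi fun j => expMeasure (r j)))

theorem isProbabilityMeasure_rungLaw (hr : ∀ j, 0 < r j) (s : ℝ) :
    IsProbabilityMeasure (rungLaw r s) :=
  haveI := isProbabilityMeasure_clockLaw hr
  Measure.isProbabilityMeasure_map (measurable_rung s).aemeasurable

theorem integrable_rungLaw (hr : ∀ j, 0 < r j) (f : Finset ι → ℝ) :
    Integrable f (rungLaw r s) :=
  haveI := isProbabilityMeasure_rungLaw hr s
  .of_finite

theorem integral_rungLaw (f : Finset ι → ℝ) :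
    ∫ S, f S ∂rungLaw r s = ∫ ω, f (rung s ω) ∂clockLaw r :=
  integral_map (measurable_rung s).aemeasurable (Measurable.of_discrete).aestronglyMeasurable

theorem iIndepFun_indicator_clockLaw (hr : ∀ j, 0 < r j) (a : ι → ℝ) :
    iIndepFun (fun j (ω : ι → ℝ) => (Set.Iic s).indicator (fun _ => a j) (ω j)) (clockLaw r) :=
  haveI := fun j => isProbabilityMeasure_expMeasure (hr j)
  iIndepFun_pi (X := fun j => (Set.Iic s).indicator fun _ => a j) fun _ =>
    (measurable_const.indicator measurableSet_Iic).aemeasurable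

theorem integral_indicator_clockLaw (hr : ∀ j, 0 < r j) (hs : 0 ≤ s) (c : ℝ) (j : ι) :
    ∫ ω, (Set.Iic s).indicator (fun _ => c) (ω j) ∂clockLaw r =
      (1 - Real.exp (-(r j * s))) * c := by
  have := fun j => isProbabilityMeasure_expMeasure (hr j)
  rw [clockLaw,
    integral_comp_eval (measurable_const.indicator measurableSet_Iic).aestronglyMeasurable,
    integral_indicator_const c measurableSet_Iic, expMeasure_real_Iic (hr j) hs, smul_eq_mul]

/-- The mean total mass `∑ a j` of the clocks that have rung by time `s`. -/
noncomputable def rungMean (r a : ι → ℝ) (s : ℝ) : ℝ := ∑ j, (1 - Real.exp (-(r j * s))) * a j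

theorem rungMean_le {a : ι → ℝ} (ha : ∀ j, 0 ≤ a j) (s : ℝ) :
    rungMean r a s ≤ s * ∑ j, r j * a j := by
  rw [rungMean, Finset.mul_sum]
  refine Finset.sum_le_sum fun j _ => ?_
  calc (1 - Real.exp (-(r j * s))) * a j ≤ r j * s * a j :=
        mul_le_mul_of_nonneg_right (by linarith [Real.add_one_le_exp (-(r j * s))]) (ha j)
    _ = s * (r j * a j) := by ring

theorem sum_rung_sub_rungMean (hr : ∀ j, 0 < r j) (hs : 0 ≤ s) (a ω : ι → ℝ) :
    ∑ j ∈ rung s ω, a j - rungMean r a s =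
      ∑ j, ((Set.Iic s).indicator (fun _ => a j) (ω j) -
        ∫ ω', (Set.Iic s).indicator (fun _ => a j) (ω' j) ∂clockLaw r) := by
  simp only [sum_rung, rungMean, integral_indicator_clockLaw hr hs, Finset.sum_sub_distrib]

theorem sum_integral_indicator_sq_le (hr : ∀ j, 0 < r j) (hs : 0 ≤ s) (a : ι → ℝ) :
    ∑ j, ∫ ω, (Set.Iic s).indicator (fun _ => a j) (ω j) ^ 2 ∂clockLaw r ≤
      s * ∑ j, r j * a j ^ 2 := by
  have hsq : ∀ j (ω : ι → ℝ), (Set.Iic s).indicator (fun _ => a j) (ω j) ^ 2 =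
      (Set.Iic s).indicator (fun _ => a j ^ 2) (ω j) := fun j ω => by
    by_cases h : ω j ∈ Set.Iic s <;> simp [h]
  simp only [hsq, integral_indicator_clockLaw hr hs]
  exact rungMean_le (fun j => sq_nonneg (a j)) s

theorem rungLaw_real_le_abs_sum_sub_rungMean_le (hr : ∀ j, 0 < r j) (hs : 0 ≤ s) {a : ι → ℝ}
    {B V t : ℝ} (hB : ∀ j, |a j| ≤ B) (hB0 : 0 ≤ B) (hV : s * ∑ j, r j * a j ^ 2 ≤ V)
    (ht : 0 ≤ t) :
    (rungLaw r s).real {S | t ≤ |∑ j ∈ S, a j - rungMean r a s|} ≤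
      2 * Real.exp (-t ^ 2 / (2 * (2 * V + B * t))) := by
  have := isProbabilityMeasure_clockLaw hr
  rw [rungLaw, map_measureReal_apply (measurable_rung s) .of_discrete]
  simp only [Set.preimage_ofPred_eq, sum_rung_sub_rungMean hr hs]
  exact measureReal_le_abs_sum_sub_integral_le (iIndepFun_indicator_clockLaw hr a)
    (fun j => measurable_indicator_Iic_eval (a j) j)
    (fun j => .of_forall fun ω => (abs_indicator_Iic_le _ _).trans (hB j)) hB0
    ((sum_integral_indicator_sq_le hr hs a).trans hV) ht

theorem integral_abs_sum_sub_rungMean_le_sqrt (hr : ∀ j, 0 < r j) (hs : 0 ≤ s) (a : ι → ℝ) :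
    ∫ S, |∑ j ∈ S, a j - rungMean r a s| ∂rungLaw r s ≤ √(s * ∑ j, r j * a j ^ 2) := by
  have := isProbabilityMeasure_clockLaw hr
  rw [integral_rungLaw]
  simp only [sum_rung_sub_rungMean hr hs]
  exact integral_abs_sum_sub_integral_le_sqrt (iIndepFun_indicator_clockLaw hr a)
    (fun j => .of_bound (measurable_indicator_Iic_eval (a j) j).aestronglyMeasurable |a j| <|
      .of_forall fun ω => abs_indicator_Iic_le _ _) (sum_integral_indicator_sq_le hr hs a)

theorem integral_sum_rungLaw (hr : ∀ j, 0 < r j) (hs : 0 ≤ s) (a : ι → ℝ) :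
    ∫ S, ∑ j ∈ S, a j ∂rungLaw r s = rungMean r a s := by
  have := isProbabilityMeasure_clockLaw hr
  simp only [integral_rungLaw, sum_rung]
  rw [integral_finsetSum]
  · simp only [integral_indicator_clockLaw hr hs, rungMean]
  · exact fun j _ => .of_bound (measurable_indicator_Iic_eval (a j) j).aestronglyMeasurable |a j| <|
      .of_forall fun ω => abs_indicator_Iic_le _ _

/-- The probability that the set of the clocks that have rung by time `s` is `S`. -/
noncomputable def rungWeight [DecidableEq ι] (r : ι → ℝ) (s : ℝ) (S : Finset ι) : ℝ :=
  (∏ j ∈ S, (1 - Real.exp (-(r j * s)))) * ∏ j ∈ Sᶜ, Real.exp (-(r j * s))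

variable [DecidableEq ι]

theorem rungLaw_real_singleton (hr : ∀ j, 0 < r j) (hs : 0 ≤ s) (S : Finset ι) :
    (rungLaw r s).real {S} = rungWeight r s S := by
  have := fun j => isProbabilityMeasure_expMeasure (hr j)
  have hbox : rung s ⁻¹' {S} =
      Set.univ.pi fun j => if j ∈ S then Set.Iic s else (Set.Iic s)ᶜ := by
    ext ω
    simp only [Set.mem_preimage, Set.mem_singleton_iff, Finset.ext_iff, mem_rung, Set.mem_univ_pi]
    refine forall_congr' fun j => ?_
    by_cases hj : j ∈ S <;> simp [hj]
  rw [rungLaw, map_measureReal_apply (measurable_rung s) (.singleton S), hbox, clockLaw,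
    measureReal_def, Measure.pi_pi, ENNReal.toReal_prod, rungWeight, ← Finset.prod_mul_prod_compl S]
  congr 1
  · refine Finset.prod_congr rfl fun j hj => ?_
    rw [if_pos hj, ← measureReal_def, expMeasure_real_Iic (hr j) hs]
  · refine Finset.prod_congr rfl fun j hj => ?_
    rw [if_neg (Finset.mem_compl.1 hj), ← measureReal_def, probReal_compl_eq_one_sub
      measurableSet_Iic, expMeasure_real_Iic (hr j) hs, sub_sub_cancel]

theorem integral_rungLaw_eq_sum (hr : ∀ j, 0 < r j) (hs : 0 ≤ s) (f : Finset ι → ℝ) :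
    ∫ S, f S ∂rungLaw r s = ∑ S, rungWeight r s S * f S := by
  rw [integral_fintype (integrable_rungLaw hr f)]
  simp only [rungLaw_real_singleton hr hs, smul_eq_mul]

theorem sum_rungWeight_zero_mul (r : ι → ℝ) (f : Finset ι → ℝ) :
    ∑ S, rungWeight r 0 S * f S = f ∅ := by
  rw [Finset.sum_eq_single ∅]
  · simp [rungWeight]
  · intro S _ hS
    obtain ⟨j, hj⟩ := Finset.nonempty_iff_ne_empty.2 hS
    rw [rungWeight, Finset.prod_eq_zero hj (by simp), zero_mul, zero_mul]
  · simp

/-- The generator of the Markov chain on `Finset ι` in which every absent `j` is added at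
rate `r j`. -/
def clockGenerator (r : ι → ℝ) (f : Finset ι → ℝ) (S : Finset ι) : ℝ :=
  ∑ j ∈ Sᶜ, r j * (f (insert j S) - f S)

theorem clockGenerator_sub_const_mul (r : ι → ℝ) (f g : Finset ι → ℝ) (c : ℝ) (S : Finset ι) :
    clockGenerator r (fun T => f T - c * g T) S =
      clockGenerator r f S - c * clockGenerator r g S := by
  simp only [clockGenerator, Finset.mul_sum, ← Finset.sum_sub_distrib]
  exact Finset.sum_congr rfl fun j _ => by ring

/-- Kolmogorov's forward equation: `S` is entered from `S.erase i`, for `i ∈ S`, at rate `r i`. -/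
theorem hasDerivAt_rungWeight (r : ι → ℝ) (S : Finset ι) (s : ℝ) :
    HasDerivAt (fun s => rungWeight r s S)
      (∑ i ∈ S, r i * rungWeight r s (S.erase i) - (∑ i ∈ Sᶜ, r i) * rungWeight r s S) s := by
  have hexp : ∀ j, HasDerivAt (fun s => Real.exp (-(r j * s)))
      (-(r j * Real.exp (-(r j * s)))) s := fun j =>
    (((hasDerivAt_id' s).const_mul (r j)).fun_neg.exp).congr_deriv (by ring)
  refine ((HasDerivAt.fun_finsetProd (u := S) fun j _ => (hexp j).const_sub 1).mul
    (HasDerivAt.fun_finsetProd (u := Sᶜ) fun j _ => hexp j)).congr_deriv ?_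
  rw [sub_eq_add_neg, Finset.sum_mul]
  congr 1
  · refine Finset.sum_congr rfl fun i hi => ?_
    rw [rungWeight, Finset.compl_erase, Finset.prod_insert (by simpa using hi), smul_eq_mul]
    ring
  · rw [rungWeight, Finset.mul_sum, Finset.sum_mul, ← Finset.sum_neg_distrib]
    refine Finset.sum_congr rfl fun i hi => ?_
    rw [← Finset.mul_prod_erase _ _ hi, smul_eq_mul]
    ring

theorem sum_sum_erase_eq_sum_sum_insert (g : ι → Finset ι → Finset ι → ℝ) :
    ∑ S : Finset ι, ∑ i ∈ S, g i (S.erase i) S = ∑ S : Finset ι, ∑ i ∈ Sᶜ, g i S (insert i S) := by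
  rw [Finset.sum_sigma', Finset.sum_sigma']
  refine Finset.sum_bij' (fun x _ => ⟨x.1.erase x.2, x.2⟩) (fun x _ => ⟨insert x.2 x.1, x.2⟩)
    ?_ ?_ ?_ ?_ ?_ <;> rintro ⟨S, i⟩ h <;> simp_all [Finset.insert_erase]

theorem hasDerivAt_sum_rungWeight_mul (r : ι → ℝ) (f : Finset ι → ℝ) (s : ℝ) :
    HasDerivAt (fun s => ∑ S, rungWeight r s S * f S)
      (∑ S, rungWeight r s S * clockGenerator r f S) s := by
  refine (HasDerivAt.fun_sum fun S _ =>
    (hasDerivAt_rungWeight r S s).mul_const (f S)).congr_deriv ?_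
  have hinflow := sum_sum_erase_eq_sum_sum_insert fun i T S => r i * rungWeight r s T * f S
  simp only [clockGenerator, Finset.mul_sum, sub_mul, Finset.sum_mul, Finset.sum_sub_distrib,
    hinflow, mul_sub]
  congr 1 <;> exact Finset.sum_congr rfl fun S _ => Finset.sum_congr rfl fun i _ => by ring

/-- Dynkin's formula, as an inequality. -/
theorem integral_rungLaw_le_of_integral_clockGenerator_le (hr : ∀ j, 0 < r j)
    {f : Finset ι → ℝ} {x κ : ℝ} (hx : 0 ≤ x)
    (hκ : ∀ s ∈ Set.Ioo 0 x, ∫ S, clockGenerator r f S ∂rungLaw r s ≤ κ) :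
    ∫ S, f S ∂rungLaw r x ≤ f ∅ + κ * x := by
  have hderiv := hasDerivAt_sum_rungWeight_mul r f
  have hgrowth := (convex_Icc 0 x).image_sub_le_mul_sub_of_deriv_le
    (f := fun s => ∑ S, rungWeight r s S * f S) (C := κ)
    (fun s _ => (hderiv s).continuousAt.continuousWithinAt)
    (fun s _ => (hderiv s).differentiableAt.differentiableWithinAt)
    (fun s hs => by
      rw [interior_Icc] at hs
      rw [(hderiv s).deriv, ← integral_rungLaw_eq_sum hr hs.1.le]
      exact hκ s hs)
    0 (Set.left_mem_Icc.2 hx) x (Set.right_mem_Icc.2 hx) hx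
  rw [← integral_rungLaw_eq_sum hr hx, sum_rungWeight_zero_mul] at hgrowth
  linarith

theorem le_integral_rungLaw_of_clockGenerator_nonneg (hr : ∀ j, 0 < r j)
    {f : Finset ι → ℝ} {x : ℝ} (hx : 0 ≤ x) (hf : ∀ S, 0 ≤ clockGenerator r f S) :
    f ∅ ≤ ∫ S, f S ∂rungLaw r x := by
  have hneg : ∀ S, clockGenerator r (fun T => -f T) S = -clockGenerator r f S := fun S => by
    simp only [clockGenerator, ← Finset.sum_neg_distrib]
    exact Finset.sum_congr rfl fun j _ => by ring
  have := integral_rungLaw_le_of_integral_clockGenerator_le hr (f := fun T => -f T) (κ := 0) hx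
    fun s _ => integral_nonpos fun S => by
      rw [hneg]
      exact neg_nonpos.2 (hf S)
  rw [integral_neg] at this
  linarith

end Clocks

section SizeBiased

variable {ι : Type*} [Fintype ι] {w : ι → ℝ} {Q : ℝ}

/-- The rates of the clocks: in the order in which clocks with these rates ring, the indices are
size-biased by `w`. -/
noncomputable def sizeBiasedRate (w : ι → ℝ) (j : ι) : ℝ := w j / ∑ i, w i

theorem sizeBiasedRate_pos (hw : ∀ i, 0 < w i) (j : ι) : 0 < sizeBiasedRate w j :=
  div_pos (hw j) (Finset.sum_pos (fun i _ => hw i) ⟨j, Finset.mem_univ j⟩)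

theorem sum_sizeBiasedRate_mul (w a : ι → ℝ) :
    ∑ j, sizeBiasedRate w j * a j = (∑ j, w j * a j) / ∑ i, w i := by
  simp only [sizeBiasedRate, div_mul_eq_mul_div, Finset.sum_div]

theorem sum_sizeBiasedRate_le_one (w : ι → ℝ) : ∑ j, sizeBiasedRate w j * 1 ≤ 1 := by
  rw [sum_sizeBiasedRate_mul]
  simpa only [mul_one] using div_self_le_one _

theorem rungMean_sizeBiasedRate_one_le (w : ι → ℝ) {s : ℝ} (hs : 0 ≤ s) :
    rungMean (sizeBiasedRate w) (fun _ => 1) s ≤ s :=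
  (rungMean_le (fun _ => zero_le_one) s).trans
    (mul_le_of_le_one_right hs (sum_sizeBiasedRate_le_one w))

theorem integral_abs_card_sub_le (hw : ∀ i, 0 < w i) {s : ℝ} (hs : 0 ≤ s) (c : ℝ) :
    ∫ S, |(S.card : ℝ) - c| ∂rungLaw (sizeBiasedRate w) s ≤
      |c - rungMean (sizeBiasedRate w) (fun _ => 1) s| + √s := by
  have hr := sizeBiasedRate_pos hw
  have := isProbabilityMeasure_rungLaw hr s
  set h := rungMean (sizeBiasedRate w) (fun _ => 1) s
  have hcentred : ∫ S, |(S.card : ℝ) - h| ∂rungLaw (sizeBiasedRate w) s ≤ √s := by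
    have hdev := integral_abs_sum_sub_rungMean_le_sqrt hr hs fun _ => 1
    simp only [Finset.sum_const, nsmul_eq_mul, mul_one, one_pow] at hdev
    refine hdev.trans (Real.sqrt_le_sqrt (mul_le_of_le_one_right hs ?_))
    simpa only [mul_one] using sum_sizeBiasedRate_le_one w
  calc ∫ S, |(S.card : ℝ) - c| ∂rungLaw (sizeBiasedRate w) s
      ≤ ∫ S, (|c - h| + |(S.card : ℝ) - h|) ∂rungLaw (sizeBiasedRate w) s :=
        integral_mono (integrable_rungLaw hr _) (integrable_rungLaw hr _) fun S => by
          rw [abs_sub_comm c h, add_comm]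
          exact abs_sub_le _ _ _
    _ = |c - h| + ∫ S, |(S.card : ℝ) - h| ∂rungLaw (sizeBiasedRate w) s := by
        rw [integral_add (integrable_const _) (integrable_rungLaw hr _), integral_const,
          probReal_univ, one_smul]
    _ ≤ |c - h| + √s := by gcongr

theorem sum_le_half_of_card_le (hw : ∀ i, 0 < w i) (hQ : ∑ i, w i ^ 2 ≤ Q * ∑ i, w i)
    {S : Finset ι} (hS : 4 * Q * S.card ≤ ∑ i, w i) : ∑ i ∈ S, w i ≤ (∑ i, w i) / 2 := by
  have hL : 0 ≤ ∑ i, w i := Finset.sum_nonneg fun i _ => (hw i).le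
  have hsq : ∑ i ∈ S, w i ^ 2 ≤ Q * ∑ i, w i :=
    (Finset.sum_le_univ_sum_of_nonneg fun i => sq_nonneg (w i)).trans hQ
  refine le_of_sq_le_sq ?_ (by positivity)
  calc (∑ i ∈ S, w i) ^ 2 ≤ S.card * ∑ i ∈ S, w i ^ 2 := sq_sum_le_card_mul_sum_sq
    _ ≤ S.card * (Q * ∑ i, w i) := by gcongr
    _ = 4 * Q * S.card * (∑ i, w i) / 4 := by ring
    _ ≤ (∑ i, w i) * (∑ i, w i) / 4 := by gcongr
    _ = ((∑ i, w i) / 2) ^ 2 := by ring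

variable [DecidableEq ι]

theorem half_le_sum_compl_of_card_le (hw : ∀ i, 0 < w i) (hQ : ∑ i, w i ^ 2 ≤ Q * ∑ i, w i)
    {S : Finset ι} (hS : 4 * Q * S.card ≤ ∑ i, w i) : (∑ i, w i) / 2 ≤ ∑ i ∈ Sᶜ, w i := by
  linarith [sum_le_half_of_card_le hw hQ hS, Finset.sum_add_sum_compl S w]

end SizeBiased

theorem cast_tsub_le_abs_sub (m k : ℕ) : ((m - k : ℕ) : ℝ) ≤ |(m : ℝ) - k| := by
  rcases le_total k m with h | h
  · rw [Nat.cast_sub h]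
    exact le_abs_self _
  · rw [Nat.sub_eq_zero_of_le h, Nat.cast_zero]
    exact abs_nonneg _

section SizeBiasedMean

variable {ι : Type*} [DecidableEq ι] {w : ι → ℝ} {Q : ℝ}

/-- The mean total weight of the first `m` picks of a size-biased sampling without replacement
from `R`. -/
noncomputable def sizeBiasedMean (w : ι → ℝ) : ℕ → Finset ι → ℝ
  | 0, _ => 0
  | m + 1, R => ∑ p ∈ R, w p / (∑ j ∈ R, w j) * (w p + sizeBiasedMean w m (R.erase p))

theorem sizeBiasedMean_nonneg (hw : ∀ i, 0 < w i) :
    ∀ (m : ℕ) (R : Finset ι), 0 ≤ sizeBiasedMean w m R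
  | 0, _ => le_rfl
  | m + 1, R => Finset.sum_nonneg fun p _ =>
      mul_nonneg (div_nonneg (hw p).le (Finset.sum_nonneg fun j _ => (hw j).le))
        (add_nonneg (hw p).le (sizeBiasedMean_nonneg hw m (R.erase p)))

variable [Fintype ι]

theorem sizeBiasedMean_compl_le (hw : ∀ i, 0 < w i) (hQ0 : 0 ≤ Q)
    (hQ : ∑ i, w i ^ 2 ≤ Q * ∑ i, w i) :
    ∀ (m : ℕ) (S : Finset ι), 4 * Q * (S.card + m) ≤ ∑ i, w i →
      sizeBiasedMean w m Sᶜ ≤ 2 * Q * m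
  | 0, _, _ => by simp [sizeBiasedMean]
  | m + 1, S, hS => by
    rw [sizeBiasedMean]
    rcases Sᶜ.eq_empty_or_nonempty with hempty | hne
    · rw [hempty, Finset.sum_empty]
      positivity
    set W := ∑ j ∈ Sᶜ, w j with hW
    have hWpos : 0 < W := Finset.sum_pos (fun i _ => hw i) hne
    have hWhalf : (∑ i, w i) / 2 ≤ W := half_le_sum_compl_of_card_le hw hQ <|
      hS.trans' <| by gcongr; exact le_add_of_nonneg_right (Nat.cast_nonneg _)
    have hnext : ∀ p ∈ Sᶜ, sizeBiasedMean w m (Sᶜ.erase p) ≤ 2 * Q * m := fun p hp => by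
      rw [← Finset.compl_insert]
      refine sizeBiasedMean_compl_le hw hQ0 hQ m (insert p S) (le_of_eq_of_le ?_ hS)
      rw [Finset.card_insert_of_notMem (Finset.mem_compl.1 hp)]
      push_cast
      ring
    have hfirst : (∑ p ∈ Sᶜ, w p ^ 2) / W ≤ 2 * Q := by
      rw [div_le_iff₀ hWpos]
      calc ∑ p ∈ Sᶜ, w p ^ 2 ≤ Q * ∑ i, w i :=
            (Finset.sum_le_univ_sum_of_nonneg fun i => sq_nonneg (w i)).trans hQ
        _ ≤ 2 * Q * W := by linarith [mul_le_mul_of_nonneg_left hWhalf hQ0]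
    calc ∑ p ∈ Sᶜ, w p / W * (w p + sizeBiasedMean w m (Sᶜ.erase p))
        ≤ ∑ p ∈ Sᶜ, w p / W * (w p + 2 * Q * m) := Finset.sum_le_sum fun p hp =>
          mul_le_mul_of_nonneg_left (add_le_add_right (hnext p hp) _)
            (div_nonneg (hw p).le hWpos.le)
      _ = (∑ p ∈ Sᶜ, w p ^ 2) / W + W / W * (2 * Q * m) := by
          simp only [mul_add, Finset.sum_add_distrib, ← Finset.sum_mul, ← Finset.sum_div,
            div_mul_eq_mul_div, ← sq, hW]
      _ ≤ 2 * Q * ((m + 1 : ℕ) : ℝ) := by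
          rw [div_self hWpos.ne']
          push_cast
          linarith

/-- The conditional mean of the total weight of the first `k` picks given that `S` is the set of
the indices picked so far; it is the weight of `S` as soon as `S` has at least `k` elements. -/
noncomputable def prospectiveWeight (w : ι → ℝ) (k : ℕ) (S : Finset ι) : ℝ :=
  ∑ i ∈ S, w i + sizeBiasedMean w (k - S.card) Sᶜ

theorem prospectiveWeight_empty (w : ι → ℝ) (k : ℕ) :
    prospectiveWeight w k ∅ = sizeBiasedMean w k Finset.univ := by
  simp [prospectiveWeight]

theorem prospectiveWeight_of_le {k : ℕ} {S : Finset ι} (hS : k ≤ S.card) :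
    prospectiveWeight w k S = ∑ i ∈ S, w i := by
  rw [prospectiveWeight, Nat.sub_eq_zero_of_le hS, sizeBiasedMean, add_zero]

theorem sum_le_prospectiveWeight (hw : ∀ i, 0 < w i) (k : ℕ) (S : Finset ι) :
    ∑ i ∈ S, w i ≤ prospectiveWeight w k S :=
  le_add_of_nonneg_right (sizeBiasedMean_nonneg hw _ _)

theorem prospectiveWeight_le (hw : ∀ i, 0 < w i) (hQ0 : 0 ≤ Q)
    (hQ : ∑ i, w i ^ 2 ≤ Q * ∑ i, w i) {k : ℕ} (hk : 4 * Q * k ≤ ∑ i, w i) (S : Finset ι) :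
    prospectiveWeight w k S ≤ ∑ i ∈ S, w i + 2 * Q * |(S.card : ℝ) - k| := by
  rcases le_total k S.card with hS | hS
  · rw [prospectiveWeight_of_le hS]
    exact le_add_of_nonneg_right (by positivity)
  · have hcast : ((k - S.card : ℕ) : ℝ) = |(S.card : ℝ) - k| := by
      rw [Nat.cast_sub hS, abs_sub_comm, abs_of_nonneg (sub_nonneg.2 (Nat.cast_le.2 hS))]
    rw [prospectiveWeight, ← hcast]
    refine add_le_add_right (sizeBiasedMean_compl_le hw hQ0 hQ _ S ?_) _
    rwa [Nat.cast_sub hS, add_sub_cancel]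

theorem clockGenerator_prospectiveWeight_of_lt (hw : ∀ i, 0 < w i) {k : ℕ} {S : Finset ι}
    (hS : S.card < k) : clockGenerator (sizeBiasedRate w) (prospectiveWeight w k) S = 0 := by
  rcases Sᶜ.eq_empty_or_nonempty with hempty | hne
  · rw [clockGenerator, hempty, Finset.sum_empty]
  have hW : ∑ i ∈ Sᶜ, w i ≠ 0 := (Finset.sum_pos (fun i _ => hw i) hne).ne'
  obtain ⟨m, rfl⟩ : ∃ m, k = S.card + m + 1 := ⟨k - S.card - 1, by lia⟩
  have hstay : prospectiveWeight w (S.card + m + 1) S = ∑ i ∈ S, w i +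
      ∑ p ∈ Sᶜ, w p / (∑ j ∈ Sᶜ, w j) * (w p + sizeBiasedMean w m (Sᶜ.erase p)) := by
    rw [prospectiveWeight, show S.card + m + 1 - S.card = m + 1 by lia, sizeBiasedMean]
  have hjump : ∀ j ∈ Sᶜ, prospectiveWeight w (S.card + m + 1) (insert j S) =
      ∑ i ∈ S, w i + (w j + sizeBiasedMean w m (Sᶜ.erase j)) := fun j hj => by
    have hj := Finset.mem_compl.1 hj
    rw [prospectiveWeight, Finset.card_insert_of_notMem hj, Finset.sum_insert hj,
      Finset.compl_insert, show S.card + m + 1 - (S.card + 1) = m by lia]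
    ring
  rw [clockGenerator, Finset.sum_congr rfl fun j hj => by rw [hjump j hj, hstay]]
  simp only [sizeBiasedRate, add_sub_add_left_eq_sub, mul_sub, Finset.sum_sub_distrib,
    ← Finset.sum_mul, ← Finset.sum_div, div_mul_eq_mul_div]
  field_simp
  simp

theorem clockGenerator_prospectiveWeight_of_le {k : ℕ} {S : Finset ι} (hS : k ≤ S.card) :
    clockGenerator (sizeBiasedRate w) (prospectiveWeight w k) S =
      (∑ i ∈ Sᶜ, w i ^ 2) / ∑ i, w i := by
  rw [clockGenerator, Finset.sum_div]
  refine Finset.sum_congr rfl fun j hj => ?_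
  have hj := Finset.mem_compl.1 hj
  rw [prospectiveWeight_of_le hS,
    prospectiveWeight_of_le (hS.trans (Finset.card_le_card (Finset.subset_insert j S))),
    Finset.sum_insert hj, add_sub_cancel_right, sizeBiasedRate, div_mul_eq_mul_div, sq]

theorem clockGenerator_card_sub_of_lt (r : ι → ℝ) {k : ℕ} {S : Finset ι} (hS : S.card < k) :
    clockGenerator r (fun T => ((T.card - k : ℕ) : ℝ)) S = 0 :=
  Finset.sum_eq_zero fun j hj => by
    beta_reduce
    rw [Finset.card_insert_of_notMem (Finset.mem_compl.1 hj), Nat.sub_eq_zero_of_le hS.le,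
      Nat.sub_eq_zero_of_le hS, sub_self, mul_zero]

theorem clockGenerator_card_sub_of_le (r : ι → ℝ) {k : ℕ} {S : Finset ι} (hS : k ≤ S.card) :
    clockGenerator r (fun T => ((T.card - k : ℕ) : ℝ)) S = ∑ i ∈ Sᶜ, r i :=
  Finset.sum_congr rfl fun j hj => by
    beta_reduce
    rw [Finset.card_insert_of_notMem (Finset.mem_compl.1 hj), Nat.succ_sub hS, Nat.cast_succ,
      add_sub_cancel_left, mul_one]

theorem sizeBiasedMean_le_rungMean_add (hw : ∀ i, 0 < w i) (hQ0 : 0 ≤ Q)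
    (hQ : ∑ i, w i ^ 2 ≤ Q * ∑ i, w i) {k : ℕ} (hk : 4 * Q * k ≤ ∑ i, w i) {x : ℝ} (hx : 0 ≤ x) :
    sizeBiasedMean w k Finset.univ ≤ rungMean (sizeBiasedRate w) w x +
      2 * Q * (|k - rungMean (sizeBiasedRate w) (fun _ => 1) x| + √x) := by
  have hr := sizeBiasedRate_pos hw
  have hgen : ∀ S, 0 ≤ clockGenerator (sizeBiasedRate w) (prospectiveWeight w k) S := fun S => by
    rcases lt_or_ge S.card k with hS | hS
    · rw [clockGenerator_prospectiveWeight_of_lt hw hS]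
    · rw [clockGenerator_prospectiveWeight_of_le hS]
      exact div_nonneg (Finset.sum_nonneg fun i _ => sq_nonneg (w i))
        (Finset.sum_nonneg fun i _ => (hw i).le)
  calc sizeBiasedMean w k Finset.univ
      = prospectiveWeight w k ∅ := (prospectiveWeight_empty w k).symm
    _ ≤ ∫ S, prospectiveWeight w k S ∂rungLaw (sizeBiasedRate w) x :=
        le_integral_rungLaw_of_clockGenerator_nonneg hr hx hgen
    _ ≤ ∫ S, (∑ i ∈ S, w i + 2 * Q * |(S.card : ℝ) - k|) ∂rungLaw (sizeBiasedRate w) x :=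
        integral_mono (integrable_rungLaw hr _) (integrable_rungLaw hr _)
          (prospectiveWeight_le hw hQ0 hQ hk)
    _ = rungMean (sizeBiasedRate w) w x +
          2 * Q * ∫ S, |(S.card : ℝ) - k| ∂rungLaw (sizeBiasedRate w) x := by
        rw [integral_add (integrable_rungLaw hr _) (integrable_rungLaw hr _),
          integral_sum_rungLaw hr hx, integral_const_mul]
    _ ≤ _ := by
        gcongr
        exact integral_abs_card_sub_le hw hx k

/-- The compensated functional `prospectiveWeight w k S - 2 * Q * (#S - k)₊` has a negative drift as
long as `S` carries at most half of the total weight; larger sets are far from the mean. -/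
theorem clockGenerator_prospectiveWeight_sub_le (hw : ∀ i, 0 < w i) (hQ0 : 0 < Q)
    (hQ : ∑ i, w i ^ 2 ≤ Q * ∑ i, w i) {h : ℝ} (hh : 8 * Q * h ≤ ∑ i, w i) (k : ℕ) (S : Finset ι) :
    clockGenerator (sizeBiasedRate w)
        (fun T => prospectiveWeight w k T - 2 * Q * ((T.card - k : ℕ) : ℝ)) S ≤
      8 * Q ^ 2 / (∑ i, w i) * |(S.card : ℝ) - h| := by
  have hL : 0 ≤ ∑ i, w i := Finset.sum_nonneg fun i _ => (hw i).le
  rw [clockGenerator_sub_const_mul]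
  rcases lt_or_ge S.card k with hS | hS
  · rw [clockGenerator_prospectiveWeight_of_lt hw hS, clockGenerator_card_sub_of_lt _ hS, mul_zero,
      sub_zero]
    positivity
  rw [clockGenerator_prospectiveWeight_of_le hS, clockGenerator_card_sub_of_le _ hS]
  simp only [sizeBiasedRate, ← Finset.sum_div, ← mul_div_assoc, ← sub_div, div_mul_eq_mul_div]
  gcongr
  have hsq : ∑ i ∈ Sᶜ, w i ^ 2 ≤ Q * ∑ i, w i :=
    (Finset.sum_le_univ_sum_of_nonneg fun i => sq_nonneg (w i)).trans hQ
  rcases le_total (4 * Q * S.card) (∑ i, w i) with hsmall | hlarge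
  · have hhalf := mul_le_mul_of_nonneg_left (half_le_sum_compl_of_card_le hw hQ hsmall) hQ0.le
    have : 0 ≤ 8 * Q ^ 2 * |(S.card : ℝ) - h| := by positivity
    linarith
  · have hcompl : 0 ≤ 2 * Q * ∑ i ∈ Sᶜ, w i :=
      mul_nonneg (by positivity) (Finset.sum_nonneg fun i _ => (hw i).le)
    calc ∑ i ∈ Sᶜ, w i ^ 2 - 2 * Q * ∑ i ∈ Sᶜ, w i ≤ Q * ∑ i, w i := by linarith
      _ ≤ Q * (8 * Q * (S.card - h)) := by gcongr; linarith
      _ = 8 * Q ^ 2 * (S.card - h) := by ring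
      _ ≤ 8 * Q ^ 2 * |(S.card : ℝ) - h| := by gcongr; exact le_abs_self _

theorem integral_clockGenerator_prospectiveWeight_sub_le (hw : ∀ i, 0 < w i) (hQ0 : 0 < Q)
    (hQ : ∑ i, w i ^ 2 ≤ Q * ∑ i, w i) {s : ℝ} (hs : 0 ≤ s) (hsL : 8 * Q * s ≤ ∑ i, w i) (k : ℕ) :
    ∫ S, clockGenerator (sizeBiasedRate w)
        (fun T => prospectiveWeight w k T - 2 * Q * ((T.card - k : ℕ) : ℝ)) S
        ∂rungLaw (sizeBiasedRate w) s ≤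
      8 * Q ^ 2 / (∑ i, w i) * √s := by
  have hr := sizeBiasedRate_pos hw
  have hL : 0 ≤ ∑ i, w i := Finset.sum_nonneg fun i _ => (hw i).le
  set h := rungMean (sizeBiasedRate w) (fun _ => 1) s with hh
  have hhL : 8 * Q * h ≤ ∑ i, w i :=
    hsL.trans' (by gcongr; exact rungMean_sizeBiasedRate_one_le w hs)
  refine (integral_mono (integrable_rungLaw hr _) (integrable_rungLaw hr _)
    (clockGenerator_prospectiveWeight_sub_le hw hQ0 hQ hhL k)).trans ?_
  rw [integral_const_mul]
  gcongr
  simpa only [← hh, sub_self, abs_zero, zero_add] using integral_abs_card_sub_le hw hs h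

theorem integral_prospectiveWeight_sub_le (hw : ∀ i, 0 < w i) (hQ0 : 0 < Q)
    (hQ : ∑ i, w i ^ 2 ≤ Q * ∑ i, w i) {x : ℝ} (hx : 0 ≤ x) (hxL : 8 * Q * x ≤ ∑ i, w i) (k : ℕ) :
    ∫ S, (prospectiveWeight w k S - 2 * Q * ((S.card - k : ℕ) : ℝ))
        ∂rungLaw (sizeBiasedRate w) x ≤ sizeBiasedMean w k Finset.univ + Q * √x := by
  have hL : 0 ≤ ∑ i, w i := Finset.sum_nonneg fun i _ => (hw i).le
  have hgen : ∀ s ∈ Set.Ioo 0 x, ∫ S, clockGenerator (sizeBiasedRate w)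
      (fun T => prospectiveWeight w k T - 2 * Q * ((T.card - k : ℕ) : ℝ)) S
        ∂rungLaw (sizeBiasedRate w) s ≤ 8 * Q ^ 2 / (∑ i, w i) * √x := fun s hs =>
    calc _ ≤ 8 * Q ^ 2 / (∑ i, w i) * √s :=
          integral_clockGenerator_prospectiveWeight_sub_le hw hQ0 hQ hs.1.le
            (hxL.trans' (by gcongr; exact hs.2.le)) k
      _ ≤ 8 * Q ^ 2 / (∑ i, w i) * √x := by gcongr; exact hs.2.le
  calc _ ≤ prospectiveWeight w k ∅ - 2 * Q * (((∅ : Finset ι).card - k : ℕ) : ℝ) +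
          8 * Q ^ 2 / (∑ i, w i) * √x * x :=
        integral_rungLaw_le_of_integral_clockGenerator_le (sizeBiasedRate_pos hw) hx hgen
    _ = sizeBiasedMean w k Finset.univ + Q * √x * (8 * Q * x / ∑ i, w i) := by
        rw [prospectiveWeight_empty, Finset.card_empty, Nat.zero_sub, Nat.cast_zero]
        ring
    _ ≤ sizeBiasedMean w k Finset.univ + Q * √x :=
        add_le_add_right (mul_le_of_le_one_right (by positivity) (div_le_one_of_le₀ hxL hL)) _

theorem rungMean_le_sizeBiasedMean_add (hw : ∀ i, 0 < w i) (hQ0 : 0 < Q)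
    (hQ : ∑ i, w i ^ 2 ≤ Q * ∑ i, w i) {x : ℝ} (hx : 0 ≤ x) (hxL : 8 * Q * x ≤ ∑ i, w i) (k : ℕ) :
    rungMean (sizeBiasedRate w) w x ≤ sizeBiasedMean w k Finset.univ + Q * √x +
      2 * Q * (|k - rungMean (sizeBiasedRate w) (fun _ => 1) x| + √x) := by
  have hr := sizeBiasedRate_pos hw
  have hcompensated := integral_prospectiveWeight_sub_le hw hQ0 hQ hx hxL k
  rw [integral_sub (integrable_rungLaw hr _) (integrable_rungLaw hr _), integral_const_mul]
    at hcompensated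
  have hweight : rungMean (sizeBiasedRate w) w x ≤
      ∫ S, prospectiveWeight w k S ∂rungLaw (sizeBiasedRate w) x := by
    rw [← integral_sum_rungLaw hr hx]
    exact integral_mono (integrable_rungLaw hr _) (integrable_rungLaw hr _)
      (sum_le_prospectiveWeight hw k)
  have hexcess : ∫ S, ((S.card - k : ℕ) : ℝ) ∂rungLaw (sizeBiasedRate w) x ≤
      |k - rungMean (sizeBiasedRate w) (fun _ => 1) x| + √x :=
    (integral_mono (integrable_rungLaw hr _) (integrable_rungLaw hr _) fun S =>
      cast_tsub_le_abs_sub S.card k).trans (integral_abs_card_sub_le hw hx k)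
  linarith [mul_le_mul_of_nonneg_left hexcess (by positivity : 0 ≤ 2 * Q)]

theorem abs_rungMean_sub_sizeBiasedMean_le (hw : ∀ i, 0 < w i) (hQ0 : 0 < Q)
    (hQ : ∑ i, w i ^ 2 ≤ Q * ∑ i, w i) {x : ℝ} (hx : 0 ≤ x) (hxL : 8 * Q * x ≤ ∑ i, w i) {k : ℕ}
    (hk : 4 * Q * k ≤ ∑ i, w i) :
    |rungMean (sizeBiasedRate w) w x - sizeBiasedMean w k Finset.univ| ≤
      2 * Q * |k - rungMean (sizeBiasedRate w) (fun _ => 1) x| + 3 * Q * √x := by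
  have hupper := sizeBiasedMean_le_rungMean_add hw hQ0.le hQ hk hx
  have hlower := rungMean_le_sizeBiasedMean_add hw hQ0 hQ hx hxL k
  have : 0 ≤ Q * √x := by positivity
  rw [abs_le]
  constructor <;> linarith

end SizeBiasedMean

section SizeBiasedOrder

variable {ι : Type*} [DecidableEq ι] {n : ℕ}

/-- The probability that the size-biased order with weights `f` is the permutation `σ`. -/
noncomputable def sizeBiasedProb (f : Fin n → ℝ) (σ : Equiv.Perm (Fin n)) : ℝ :=
  ∏ i, f (σ i) / ((∑ k, f k) - ∑ k ∈ Finset.univ.filter fun k => k < i, f (σ k))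

theorem sizeBiasedProb_nonneg {f : Fin n → ℝ} (hf : ∀ i, 0 ≤ f i) (σ : Equiv.Perm (Fin n)) :
    0 ≤ sizeBiasedProb f σ := by
  refine Finset.prod_nonneg fun i _ => div_nonneg (hf _) ?_
  rw [sub_nonneg, ← Equiv.sum_comp σ f]
  exact Finset.sum_le_univ_sum_of_nonneg fun k => hf _

theorem sum_swap_zero_succ (f : Fin (n + 1) → ℝ) (p : Fin (n + 1)) :
    ∑ k : Fin n, f (Equiv.swap 0 p k.succ) = ∑ k, f k - f p := by
  have h := Equiv.sum_comp (Equiv.swap 0 p) f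
  rw [Fin.sum_univ_succ, Equiv.swap_apply_left] at h
  exact eq_sub_of_add_eq' h

theorem image_swap_zero_succ {e : Fin (n + 1) → ι} (he : Function.Injective e) (p : Fin (n + 1)) :
    (Finset.univ.image fun k : Fin n => e (Equiv.swap 0 p k.succ)) =
      (Finset.univ.image e).erase (e p) := by
  have hinj : Function.Injective (e ∘ Equiv.swap 0 p) := he.comp (Equiv.swap 0 p).injective
  calc _ = (Finset.univ.image Fin.succ).image (e ∘ Equiv.swap 0 p) := by
        rw [Finset.image_image]
        rfl
    _ = (Finset.univ.image (e ∘ Equiv.swap 0 p)).erase (e p) := by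
        rw [Fin.image_succ_univ, Finset.compl_singleton, Finset.image_erase hinj,
          Function.comp_apply, Equiv.swap_apply_left]
    _ = (Finset.univ.image e).erase (e p) := by
        rw [← Finset.image_image, Finset.image_univ_equiv]

theorem sizeBiasedProb_decomposeFin_symm (f : Fin (n + 1) → ℝ) (p : Fin (n + 1))
    (τ : Equiv.Perm (Fin n)) :
    sizeBiasedProb f (Equiv.Perm.decomposeFin.symm (p, τ)) =
      f p / (∑ k, f k) * sizeBiasedProb (fun k : Fin n => f (Equiv.swap 0 p k.succ)) τ := by
  rw [sizeBiasedProb, Fin.prod_univ_succ]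
  congr 1
  · simp
  · refine Finset.prod_congr rfl fun i _ => ?_
    rw [Equiv.Perm.decomposeFin_symm_apply_succ, sum_swap_zero_succ, Finset.sum_filter,
      Finset.sum_filter, Fin.sum_univ_succ (n := n) (f := fun a => if a < i.succ then _ else _)]
    simp only [Fin.succ_pos, if_true, Equiv.Perm.decomposeFin_symm_apply_zero,
      Fin.succ_lt_succ_iff, Equiv.Perm.decomposeFin_symm_apply_succ, sub_add_eq_sub_sub]

theorem sum_sizeBiasedProb : ∀ {n : ℕ} {f : Fin n → ℝ}, (∀ i, 0 < f i) →
    ∑ σ : Equiv.Perm (Fin n), sizeBiasedProb f σ = 1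
  | 0, _, _ => by simp [sizeBiasedProb]
  | n + 1, f, hf => by
    rw [← Equiv.sum_comp Equiv.Perm.decomposeFin.symm, Fintype.sum_prod_type]
    simp only [sizeBiasedProb_decomposeFin_symm, ← Finset.mul_sum,
      sum_sizeBiasedProb fun _ => hf _, mul_one]
    rw [← Finset.sum_div, div_self (Finset.sum_pos (fun i _ => hf i) Finset.univ_nonempty).ne']

theorem sum_sizeBiasedProb_mul {w : ι → ℝ} (hw : ∀ i, 0 < w i) :
    ∀ {n : ℕ} {e : Fin n → ι}, Function.Injective e → ∀ m : ℕ,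
    ∑ σ : Equiv.Perm (Fin n), sizeBiasedProb (fun i => w (e i)) σ *
      (∑ i : Fin n, if (i : ℕ) < m then w (e (σ i)) else 0) =
        sizeBiasedMean w m (Finset.univ.image e)
  | _, e, _, 0 => by simp [sizeBiasedMean]
  | 0, e, _, m + 1 => by simp [sizeBiasedMean]
  | n + 1, e, he, m + 1 => by
    rw [← Equiv.sum_comp Equiv.Perm.decomposeFin.symm, Fintype.sum_prod_type, sizeBiasedMean,
      Finset.sum_image he.injOn, Finset.sum_image he.injOn]
    refine Finset.sum_congr rfl fun p _ => ?_
    simp only [sizeBiasedProb_decomposeFin_symm, mul_assoc]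
    rw [← Finset.mul_sum]
    congr 1
    simp only [Fin.sum_univ_succ (n := n), Equiv.Perm.decomposeFin_symm_apply_zero,
      Equiv.Perm.decomposeFin_symm_apply_succ, Fin.val_zero, Fin.val_succ, Nat.succ_pos, if_true,
      Nat.add_lt_add_iff_right, mul_add]
    have hinj : Function.Injective fun k : Fin n => e (Equiv.swap 0 p k.succ) :=
      he.comp ((Equiv.swap 0 p).injective.comp (Fin.succ_injective n))
    rw [Finset.sum_add_distrib, ← Finset.sum_mul, sum_sizeBiasedProb fun _ => hw _, one_mul,
      sum_sizeBiasedProb_mul hw hinj m, image_swap_zero_succ he]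

theorem integral_sbMeasure {w : Fin n → ℝ} (hw : ∀ i, 0 ≤ w i) (F : (Fin n → Fin n) → ℝ) :
    ∫ v, F v ∂sbMeasure n w = ∑ σ : Equiv.Perm (Fin n), sizeBiasedProb w σ * F σ := by
  rw [sbMeasure, Measure.sum_fintype, integral_finsetSum_measure fun σ _ =>
    (integrable_dirac (by simp)).smul_measure ENNReal.ofReal_ne_top]
  refine Finset.sum_congr rfl fun σ _ => ?_
  rw [← sizeBiasedProb, integral_smul_measure, integral_dirac, smul_eq_mul,
    ENNReal.toReal_ofReal (sizeBiasedProb_nonneg hw σ)]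

theorem sum_Icc_sbW (w : Fin n → ℝ) (v : Fin n → Fin n) {m : ℕ} (hm : m ≤ n) :
    ∑ k ∈ Finset.Icc 1 m, sbW w v k = ∑ i : Fin n, if (i : ℕ) < m then w (v i) else 0 := by
  calc ∑ k ∈ Finset.Icc 1 m, sbW w v k
      = ∑ i ∈ Finset.range m, sbW w v (i + 1) := by
        rw [← Finset.Ico_add_one_right_eq_Icc, Finset.sum_Ico_eq_sum_range]
        simp only [Nat.add_sub_cancel, add_comm 1]
    _ = ∑ i ∈ Finset.range n, if i < m then sbW w v (i + 1) else 0 := by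
        rw [← Finset.sum_filter]
        congr 1
        ext i
        simp only [Finset.mem_filter, Finset.mem_range]
        omega
    _ = ∑ i : Fin n, if (i : ℕ) < m then w (v i) else 0 := by
        rw [Finset.sum_range]
        simp [sbW]

theorem sum_integral_sbW {w : Fin n → ℝ} (hw : ∀ i, 0 < w i) {m : ℕ} (hm : m ≤ n) :
    ∑ k ∈ Finset.Icc 1 m, ∫ v, sbW w v k ∂sbMeasure n w = sizeBiasedMean w m Finset.univ := by
  simp only [integral_sbMeasure fun i => (hw i).le]
  rw [Finset.sum_comm]
  simp only [← Finset.mul_sum, sum_Icc_sbW w _ hm]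
  simpa only [id, Finset.image_id] using sum_sizeBiasedProb_mul hw Function.injective_id m

end SizeBiasedOrder

section RunningMean

variable {ι : Type*} [Fintype ι] {w : ι → ℝ} {B Q x : ℝ}

theorem rungLaw_real_le_abs_sum_sub_le (hw : ∀ i, 0 < w i) (hB : ∀ i, w i ≤ B) (hB0 : 0 ≤ B)
    (hQ : ∑ i, w i ^ 3 ≤ Q ^ 2 * ∑ i, w i) (hx : 0 ≤ x) {t : ℝ} (ht : 0 ≤ t) :
    (rungLaw (sizeBiasedRate w) x).real
        {S | t ≤ |∑ i ∈ S, w i - rungMean (sizeBiasedRate w) w x|} ≤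
      2 * Real.exp (-t ^ 2 / (2 * (2 * (x * Q ^ 2) + B * t))) := by
  refine rungLaw_real_le_abs_sum_sub_rungMean_le (sizeBiasedRate_pos hw) hx
    (fun i => (abs_of_pos (hw i)).trans_le (hB i)) hB0 ?_ ht
  simp only [sum_sizeBiasedRate_mul, ← pow_succ']
  exact mul_le_mul_of_nonneg_left (div_le_of_le_mul₀ (Finset.sum_nonneg fun i _ => (hw i).le)
    (sq_nonneg Q) hQ) hx

theorem rungLaw_real_le_abs_card_sub_le (hw : ∀ i, 0 < w i) (hx : 0 ≤ x) {t : ℝ} (ht : 0 ≤ t) :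
    (rungLaw (sizeBiasedRate w) x).real
        {S | t ≤ |(S.card : ℝ) - rungMean (sizeBiasedRate w) (fun _ => 1) x|} ≤
      2 * Real.exp (-t ^ 2 / (2 * (2 * x + t))) := by
  have hV : x * ∑ i, sizeBiasedRate w i * 1 ^ 2 ≤ x := by
    simpa only [one_pow] using mul_le_of_le_one_right hx (sum_sizeBiasedRate_le_one w)
  simpa using rungLaw_real_le_abs_sum_sub_rungMean_le (a := fun _ => 1) (sizeBiasedRate_pos hw) hx
    (fun _ => abs_one.le) zero_le_one hV ht

theorem sum_sq_le_of_sum_cube_le (hw : ∀ i, 0 ≤ w i) (hQ0 : 0 ≤ Q)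
    (hQ : ∑ i, w i ^ 3 ≤ Q ^ 2 * ∑ i, w i) : ∑ i, w i ^ 2 ≤ Q * ∑ i, w i := by
  have hL : 0 ≤ ∑ i, w i := Finset.sum_nonneg fun i _ => hw i
  refine le_of_sq_le_sq ?_ (by positivity)
  calc (∑ i, w i ^ 2) ^ 2 ≤ (∑ i, w i) * ∑ i, w i ^ 3 :=
        Finset.sum_sq_le_sum_mul_sum_of_sq_le_mul _ (fun i _ => hw i)
          (fun i _ => pow_nonneg (hw i) 3) fun i _ => by
            rw [← pow_succ', ← pow_mul]
    _ ≤ (∑ i, w i) * (Q ^ 2 * ∑ i, w i) := by gcongr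
    _ = (Q * ∑ i, w i) ^ 2 := by ring

theorem one_le_four_mul_exp_neg_div {a b : ℝ} (hab : a ≤ b) (hb : 0 ≤ b) :
    1 ≤ 4 * Real.exp (-a / b) := by
  have h : Real.exp (-1) ≤ Real.exp (-a / b) := by
    rw [Real.exp_le_exp, neg_div]
    exact neg_le_neg (div_le_one_of_le₀ hab hb)
  have h1 : 1 ≤ 4 * Real.exp (-1) := by
    rw [Real.exp_neg, ← div_eq_mul_inv, one_le_div (Real.exp_pos 1)]
    linarith [Real.exp_one_lt_three]
  linarith

theorem neg_div_sq_div_le {y c d D : ℝ} (hd : 0 < c ^ 2 * d) (hD : c ^ 2 * d ≤ D) :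
    -(y / c) ^ 2 / d ≤ -y ^ 2 / D := by
  rw [div_pow, ← neg_div, div_div, neg_div, neg_div, neg_le_neg_iff]
  gcongr

variable [DecidableEq ι]

theorem abs_sum_sub_sizeBiasedMean_card_lt (hw : ∀ i, 0 < w i) (hQ0 : 0 < Q)
    (hQ : ∑ i, w i ^ 2 ≤ Q * ∑ i, w i) (hx : 0 ≤ x) (hxL : 8 * Q * x ≤ ∑ i, w i) {y : ℝ}
    (hyL : 2 * y ≤ ∑ i, w i) (hxy : 9 * Q * √x ≤ y) {S : Finset ι}
    (hweight : |∑ i ∈ S, w i - rungMean (sizeBiasedRate w) w x| < y / 3)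
    (hcard : |(S.card : ℝ) - rungMean (sizeBiasedRate w) (fun _ => 1) x| < y / (6 * Q)) :
    |∑ i ∈ S, w i - sizeBiasedMean w S.card Finset.univ| < y := by
  rw [lt_div_iff₀ (by positivity)] at hcard
  have hk : 4 * Q * S.card ≤ ∑ i, w i := by
    have hS : (S.card : ℝ) - x ≤ |(S.card : ℝ) - rungMean (sizeBiasedRate w) (fun _ => 1) x| :=
      (sub_le_sub_left (rungMean_sizeBiasedRate_one_le w hx) _).trans (le_abs_self _)
    have := mul_le_mul_of_nonneg_right hS hQ0.le
    have : 0 ≤ Q * x := by positivity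
    linarith
  have hmean := abs_rungMean_sub_sizeBiasedMean_le hw hQ0 hQ hx hxL hk
  have htriangle := abs_sub_le (∑ i ∈ S, w i) (rungMean (sizeBiasedRate w) w x)
    (sizeBiasedMean w S.card Finset.univ)
  linarith

theorem rungLaw_real_le_abs_sum_sub_sizeBiasedMean_card_le_of_lt (hw : ∀ i, 0 < w i)
    (hB : ∀ i, w i ≤ B) (hB0 : 0 < B) (hQ0 : 0 < Q) (hQ : ∑ i, w i ^ 3 ≤ Q ^ 2 * ∑ i, w i)
    (hx : 0 ≤ x) (hxL : 8 * Q * x ≤ ∑ i, w i) {y : ℝ} (hyL : 2 * y ≤ ∑ i, w i)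
    (hxy : 9 * Q * √x < y) :
    (rungLaw (sizeBiasedRate w) x).real
        {S | y ≤ |∑ i ∈ S, w i - sizeBiasedMean w S.card Finset.univ|} ≤
      4 * Real.exp (-y ^ 2 / (144 * Q ^ 2 * x + 12 * (B + Q) * y)) := by
  have := isProbabilityMeasure_rungLaw (sizeBiasedRate_pos hw) x
  have hy0 : 0 < y := hxy.trans_le' (by positivity)
  have hweight := rungLaw_real_le_abs_sum_sub_le hw hB hB0.le hQ hx (t := y / 3) (by positivity)
  have hcard := rungLaw_real_le_abs_card_sub_le hw hx (t := y / (6 * Q)) (by positivity)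
  have hQx : 0 ≤ Q ^ 2 * x := by positivity
  have hBy : 0 < B * y := by positivity
  have hQy : 0 < Q * y := by positivity
  have hexp_weight : -(y / 3) ^ 2 / (2 * (2 * (x * Q ^ 2) + B * (y / 3))) ≤
      -y ^ 2 / (144 * Q ^ 2 * x + 12 * (B + Q) * y) := by
    apply neg_div_sq_div_le <;> linarith
  have hexp_card : -(y / (6 * Q)) ^ 2 / (2 * (2 * x + y / (6 * Q))) ≤
      -y ^ 2 / (144 * Q ^ 2 * x + 12 * (B + Q) * y) := by
    have hc : (6 * Q) ^ 2 * (2 * (2 * x + y / (6 * Q))) = 144 * Q ^ 2 * x + 12 * (Q * y) := by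
      field_simp
      ring
    apply neg_div_sq_div_le <;> linarith
  calc _ ≤ (rungLaw (sizeBiasedRate w) x).real
          ({S | y / 3 ≤ |∑ i ∈ S, w i - rungMean (sizeBiasedRate w) w x|} ∪
            {S | y / (6 * Q) ≤ |(S.card : ℝ) - rungMean (sizeBiasedRate w) (fun _ => 1) x|}) := by
        refine measureReal_mono fun S hS => ?_
        by_contra hnot
        simp only [Set.mem_union, Set.mem_ofPred_eq, not_or, not_le] at hnot
        exact (abs_sum_sub_sizeBiasedMean_card_lt hw hQ0
          (sum_sq_le_of_sum_cube_le (fun i => (hw i).le) hQ0.le hQ) hx hxL hyL hxy.le hnot.1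
          hnot.2).not_ge hS
    _ ≤ 2 * Real.exp (-(y / 3) ^ 2 / (2 * (2 * (x * Q ^ 2) + B * (y / 3)))) +
          2 * Real.exp (-(y / (6 * Q)) ^ 2 / (2 * (2 * x + y / (6 * Q)))) :=
        (measureReal_union_le _ _).trans (add_le_add hweight hcard)
    _ ≤ 2 * Real.exp (-y ^ 2 / (144 * Q ^ 2 * x + 12 * (B + Q) * y)) +
          2 * Real.exp (-y ^ 2 / (144 * Q ^ 2 * x + 12 * (B + Q) * y)) := by gcongr
    _ = _ := by ring

theorem rungLaw_real_le_abs_sum_sub_sizeBiasedMean_card_le (hw : ∀ i, 0 < w i)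
    (hB : ∀ i, w i ≤ B) (hB0 : 0 < B) (hQ0 : 0 < Q) (hQ : ∑ i, w i ^ 3 ≤ Q ^ 2 * ∑ i, w i)
    (hx : 0 ≤ x) (hxL : 8 * Q * x ≤ ∑ i, w i) {y : ℝ} (hy : 0 ≤ y)
    (hyL : 2 * y ≤ ∑ i, w i) :
    (rungLaw (sizeBiasedRate w) x).real
        {S | y ≤ |∑ i ∈ S, w i - sizeBiasedMean w S.card Finset.univ|} ≤
      4 * Real.exp (-y ^ 2 / (144 * Q ^ 2 * x + 12 * (B + Q) * y)) := by
  have := isProbabilityMeasure_rungLaw (sizeBiasedRate_pos hw) x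
  rcases lt_or_ge (9 * Q * √x) y with hxy | hxy
  · exact rungLaw_real_le_abs_sum_sub_sizeBiasedMean_card_le_of_lt hw hB hB0 hQ0 hQ hx hxL hyL hxy
  · refine measureReal_le_one.trans (one_le_four_mul_exp_neg_div ?_ (by positivity))
    calc y ^ 2 ≤ (9 * Q * √x) ^ 2 := by gcongr
      _ = 81 * Q ^ 2 * x := by rw [mul_pow, Real.sq_sqrt hx]; ring
      _ ≤ 144 * Q ^ 2 * x + 12 * (B + Q) * y := by
        have : 0 ≤ Q ^ 2 * x := by positivity
        have : 0 ≤ (B + Q) * y := by positivity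
        linarith

end RunningMean

section FixedSize

variable {n : ℕ} {w : Fin n → ℝ} {x y : ℝ}

theorem Nclock_eq_card_rung (x : ℝ) (ω : Fin n → ℝ) : Nclock x ω = (rung x ω).card := by
  simp [Nclock, rung]

theorem Xclock_eq_sum_rung (w : Fin n → ℝ) (x : ℝ) (ω : Fin n → ℝ) :
    Xclock w x ω = ∑ k ∈ rung x ω, w k := by
  simp [Xclock, rung, Finset.sum_filter]

theorem clocksMeasure_eq_clockLaw (w : Fin n → ℝ) :
    clocksMeasure n w = clockLaw (sizeBiasedRate w) :=
  rfl

theorem setOf_le_abs_Xclock_sub_eq_preimage_rung (hw : ∀ i, 0 < w i) (x y : ℝ) :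
    {ω : Fin n → ℝ | y ≤ |Xclock w x ω - ∑ k ∈ Finset.Icc 1 (Nclock x ω),
        ∫ v, sbW w v k ∂sbMeasure n w|} =
      rung x ⁻¹' {S | y ≤ |∑ i ∈ S, w i - sizeBiasedMean w S.card Finset.univ|} := by
  ext ω
  have hcard : (rung x ω).card ≤ n := (Finset.card_le_univ _).trans_eq (Fintype.card_fin n)
  rw [Set.mem_preimage, Set.mem_ofPred_eq, Set.mem_ofPred_eq, Nclock_eq_card_rung,
    Xclock_eq_sum_rung, sum_integral_sbW hw hcard]

theorem le_mul_rpow_of_sum_cube_le (hw : ∀ i, 0 ≤ w i) {K : ℝ} (hK : 1 ≤ K)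
    (hcube : ∑ i, w i ^ 3 ≤ K * n) (i : Fin n) : w i ≤ K * (n : ℝ) ^ ((1 : ℝ) / 3) := by
  refine le_of_pow_le_pow_left₀ three_ne_zero (by positivity) ?_
  calc w i ^ 3 ≤ ∑ i, w i ^ 3 :=
        Finset.single_le_sum (fun j _ => pow_nonneg (hw j) 3) (Finset.mem_univ i)
    _ ≤ K * n := hcube
    _ ≤ K ^ 3 * n := by
        gcongr
        exact le_self_pow₀ hK three_ne_zero
    _ = (K * (n : ℝ) ^ ((1 : ℝ) / 3)) ^ 3 := by
        rw [mul_pow, one_div]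
        congr 1
        exact_mod_cast (Real.rpow_inv_natCast_pow n.cast_nonneg three_ne_zero).symm

theorem clocksMeasure_le_abs_Xclock_sub_le (hw : ∀ i, 0 < w i) (hn : 0 < n) {K : ℝ} (hK : 1 ≤ K)
    (hsum : n ≤ K * ∑ i, w i) (hcube : ∑ i, w i ^ 3 ≤ K * n) (hx : 0 ≤ x)
    (hxn : 8 * K ^ 2 * x ≤ n) (hy : 0 < y) (hyn : 2 * K * y ≤ n) :
    clocksMeasure n w {ω : Fin n → ℝ | y ≤ |Xclock w x ω - ∑ k ∈ Finset.Icc 1 (Nclock x ω),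
        ∫ v, sbW w v k ∂sbMeasure n w|} ≤
      ENNReal.ofReal (144 * K ^ 2 *
        Real.exp (-y ^ 2 / (144 * K ^ 2 * (y * (n : ℝ) ^ ((1 : ℝ) / 3) + x)))) := by
  have hK0 : 0 < K := one_pos.trans_le hK
  have hn1 : 1 ≤ (n : ℝ) ^ ((1 : ℝ) / 3) :=
    Real.one_le_rpow (Nat.one_le_cast.2 hn) (by norm_num)
  have hcubeL : ∑ i, w i ^ 3 ≤ K ^ 2 * ∑ i, w i := by
    calc ∑ i, w i ^ 3 ≤ K * n := hcube
      _ ≤ K * (K * ∑ i, w i) := by gcongr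
      _ = K ^ 2 * ∑ i, w i := by ring
  have hxL : 8 * K * x ≤ ∑ i, w i := le_of_mul_le_mul_left (by linarith) hK0
  have hyL : 2 * y ≤ ∑ i, w i := le_of_mul_le_mul_left (by linarith) hK0
  have hdenom : 144 * K ^ 2 * x + 12 * (K * (n : ℝ) ^ ((1 : ℝ) / 3) + K) * y ≤
      144 * K ^ 2 * (y * (n : ℝ) ^ ((1 : ℝ) / 3) + x) := by
    set p := (n : ℝ) ^ ((1 : ℝ) / 3)
    calc _ ≤ 144 * K ^ 2 * x + 12 * (K * p + K * p) * y := by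
          gcongr
          exact le_mul_of_one_le_right hK0.le hn1
      _ = 144 * K ^ 2 * x + 24 * K * (p * y) := by ring
      _ ≤ 144 * K ^ 2 * x + 144 * K ^ 2 * (p * y) := by
          gcongr
          · norm_num
          · exact le_self_pow₀ hK two_ne_zero
      _ = _ := by ring
  have := isProbabilityMeasure_rungLaw (sizeBiasedRate_pos hw) x
  rw [setOf_le_abs_Xclock_sub_eq_preimage_rung hw, clocksMeasure_eq_clockLaw,
    ← Measure.map_apply (measurable_rung x) .of_discrete, ← rungLaw, ← ofReal_measureReal]
  refine ENNReal.ofReal_le_ofReal ?_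
  calc _ ≤ 4 * Real.exp
        (-y ^ 2 / (144 * K ^ 2 * x + 12 * (K * (n : ℝ) ^ ((1 : ℝ) / 3) + K) * y)) :=
        rungLaw_real_le_abs_sum_sub_sizeBiasedMean_card_le hw
          (le_mul_rpow_of_sum_cube_le (fun i => (hw i).le) hK hcube) (by positivity) hK0 hcubeL
          hx hxL hy.le hyL
    _ ≤ _ := by
        rw [neg_div, neg_div]
        gcongr
        linarith [one_le_pow₀ hK (n := 2)]

end FixedSize

theorem clock_process_concentration_around_running_mean_general
    (w : ∀ n : ℕ, Fin n → ℝ) (hw : ∀ n i, 0 < w n i)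
    (hell : (fun n : ℕ => (n : ℝ)) =O[atTop] ell w)
    (hcube : (fun n : ℕ => ∑ i, w n i ^ 3) =O[atTop] fun n => (n : ℝ)) :
    ∃ A > (0 : ℝ), ∀ x y : ℕ → ℝ, (x =o[atTop] fun n => (n : ℝ)) →
      (y =o[atTop] fun n => (n : ℝ)) → (∀ᶠ n in atTop, 0 ≤ x n) → (∀ᶠ n in atTop, 0 < y n) →
      ∀ᶠ n : ℕ in atTop,
        clocksMeasure n (w n)
          {ω : Fin n → ℝ |
            y n ≤ |Xclock (w n) (x n) ω - ∑ k ∈ Finset.Icc 1 (Nclock (x n) ω),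
                ∫ ω', sbW (w n) ω' k ∂sbMeasure n (w n)|}
        ≤ ENNReal.ofReal
            (A * Real.exp (-(y n) ^ 2 / (A * (y n * (n : ℝ) ^ ((1 : ℝ) / 3) + x n)))) := by
  obtain ⟨c, hc⟩ := hell.isBigOWith
  obtain ⟨d, hd⟩ := hcube.isBigOWith
  set K := max 1 (max c d)
  have hK : 1 ≤ K := le_max_left _ _
  refine ⟨144 * K ^ 2, by positivity, fun x y hxo hyo hx hy => ?_⟩
  filter_upwards [(hc.weaken ((le_max_left c d).trans (le_max_right 1 _))).bound,
    (hd.weaken ((le_max_right c d).trans (le_max_right 1 _))).bound,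
    hxo.def (c := (8 * K ^ 2)⁻¹) (by positivity), hyo.def (c := (2 * K)⁻¹) (by positivity), hx, hy,
    eventually_gt_atTop 0] with n hell_n hcube_n hxn hyn hx0 hy0 hn
  have hL : 0 ≤ ell w n := Finset.sum_nonneg fun i _ => (hw n i).le
  rw [Real.norm_natCast, Real.norm_of_nonneg hL] at hell_n
  rw [Real.norm_natCast, ← div_eq_inv_mul, le_div_iff₀' (by positivity)] at hxn hyn
  rw [Real.norm_natCast] at hcube_n
  rw [Real.norm_of_nonneg hx0] at hxn
  rw [Real.norm_of_nonneg hy0.le] at hyn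
  exact clocksMeasure_le_abs_Xclock_sub_le (hw n) hn hK hell_n ((le_abs_self _).trans hcube_n)
    hx0 hxn hy0 hyn

namespace CondC

variable {w : ∀ n : ℕ, Fin n → ℝ} {μ : Measure ℝ}

theorem integrable_id (hC : CondC w μ) : Integrable (fun x => x) μ := by
  have := hC.isProb
  refine ((integrable_const (1 : ℝ)).add hC.int3).mono' measurable_id.aestronglyMeasurable ?_
  filter_upwards [hC.pos] with x hx
  rw [Real.norm_of_nonneg hx.le, Pi.add_apply]
  rcases le_total x 1 with h | h
  · exact h.trans (le_add_of_nonneg_right (by positivity))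
  · exact (le_self_pow₀ h three_ne_zero).trans (le_add_of_nonneg_left zero_le_one)

theorem integral_pos (hC : CondC w μ) : 0 < ∫ x, x ∂μ := by
  have := hC.isProb
  have hnonneg : 0 ≤ᵐ[μ] fun x : ℝ => x := hC.pos.mono fun x hx => hx.le
  refine (integral_nonneg_of_ae hnonneg).lt_of_ne' fun h => ?_
  rw [integral_eq_zero_iff_of_nonneg_ae hnonneg hC.integrable_id] at h
  obtain ⟨x, hx, hx0⟩ := (hC.pos.and h).exists
  exact hx.ne' hx0

theorem isBigO_ell (hC : CondC w μ) : (fun n : ℕ => (n : ℝ)) =O[atTop] ell w := by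
  have hpow : (fun n : ℕ => (n : ℝ) ^ ((2 : ℝ) / 3)) =O[atTop] fun n => (n : ℝ) := by
    refine .of_norm_eventuallyLE ?_
    filter_upwards [eventually_ge_atTop 1] with n hn
    rw [Real.norm_of_nonneg (by positivity)]
    exact Real.rpow_le_self_of_one_le (by exact_mod_cast hn) (by norm_num)
  have hequiv : ell w ~[atTop] fun n => (∫ x, x ∂μ) * (n : ℝ) :=
    (hC.ell_asymp.trans_isBigO hpow).const_mul_right hC.integral_pos.ne'
  exact (isBigO_self_const_mul hC.integral_pos.ne' _ _).trans hequiv.isBigO_symm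

theorem sum_cube_isBigO (hC : CondC w μ) :
    (fun n : ℕ => ∑ i, w n i ^ 3) =O[atTop] fun n => (n : ℝ) := by
  have hone : (fun _ : ℕ => (1 : ℝ)) =O[atTop] fun n : ℕ => (n : ℝ) :=
    (isLittleO_const_id_atTop (1 : ℝ)).isBigO.comp_tendsto tendsto_natCast_atTop_atTop
  exact ((hC.cube_asymp.isBigO.trans hone).add
    (isBigO_const_mul_self (∫ x, x ^ 3 ∂μ) (fun n : ℕ => (n : ℝ)) atTop)).congr_left
      fun n => sub_add_cancel _ _

end CondC

/-- Lemma of the paper: concentration of `X(x_n)` around the running sum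
of the means of the size-biased weights. -/
theorem clock_process_concentration_around_running_mean
    (w : ∀ n : ℕ, Fin n → ℝ) (μ : Measure ℝ) (hC : CondC w μ) :
    ∃ Abar > (0 : ℝ), ∃ A > (0 : ℝ), ∀ x y : ℕ → ℝ, Cond2 w Abar x y →
      ∀ᶠ n : ℕ in atTop,
        clocksMeasure n (w n)
          {ω : Fin n → ℝ |
            y n ≤ |Xclock (w n) (x n) ω - ∑ k ∈ Finset.Icc 1 (Nclock (x n) ω),
                ∫ ω', sbW (w n) ω' k ∂sbMeasure n (w n)|}
        ≤ ENNReal.ofReal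
            (A * Real.exp (-(y n) ^ 2 / (A * (y n * (n : ℝ) ^ ((1 : ℝ) / 3) + x n)))) := by
  obtain ⟨A, hA, h⟩ := clock_process_concentration_around_running_mean_general w hC.w_pos
    hC.isBigO_ell hC.sum_cube_isBigO
  exact ⟨1, one_pos, A, hA, fun x y h2 => h x y h2.a_lito (h2.b_bigO.trans_isLittleO h2.a_lito)
    (h2.a_top.eventually_ge_atTop 0) (h2.b_top.eventually_gt_atTop 0)⟩
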